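/- arXiv:2312.07841 — 8 statements merged into one kernel-verified Lean document; each statement's English description precedes it below -/
import Mathlib

section
/- Let C ≥ 2, N ≥ 1, p ≥ 1 be integers, let γ > 0 satisfy γ·(C−2) ≤ 2, and let E1, E2 ≥ 0 be reals. Then for any vectors w_1, …, w_C ∈ ℝ^p with ‖w_c‖₂ ≤ E1 for every c ∈ [C], and any vectors h_{i,c} ∈ ℝ^p (i ∈ [N], c ∈ [C]) with ‖h_{i,c}‖₂ ≤ E2, the average unhinged loss satisfies (1/(C·N)) · Σ_{i=1}^{N} Σ_{c=1}^{C} ( −⟨w_c, h_{i,c}⟩ + γ · Σ_{j≠c} ⟨w_j, h_{i,c}⟩ ) ≥ −(1+γ)·E1·E2. -/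
/-!
With `S = ∑ j, w j` and `v c = (1 + γ) w c - γ S`, each summand of the loss is `-⟪v c, h i c⟫`,
so by Cauchy–Schwarz it suffices that `∑ c, ‖v c‖ ≤ C (1 + γ) E1`. Expanding,
`∑ c, ‖v c‖² = (1 + γ)² ∑ c, ‖w c‖² + γ (γ (C - 2) - 2) ‖S‖²`,
and the condition on `γ` makes the coefficient of `‖S‖²` nonpositive; a second use of
Cauchy–Schwarz passes from the squared norms to the norms.
-/

open scoped BigOperators
open RealInnerProductSpace

/-- Sum of squared norms of the effective prototypes `(1 + γ) w c - γ ∑ j, w j`. -/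
lemma sum_norm_sq_effective {E : Type*} [NormedAddCommGroup E] [InnerProductSpace ℝ E]
    (C : ℕ) (γ : ℝ) (w : Fin C → E) :
    ∑ c, ‖(1 + γ) • w c - γ • ∑ j, w j‖ ^ 2
      = (1 + γ) ^ 2 * ∑ c, ‖w c‖ ^ 2 + γ * (γ * ((C : ℝ) - 2) - 2) * ‖∑ j, w j‖ ^ 2 := by
  set S := ∑ j, w j with hS
  have hexp : ∀ c, ‖(1 + γ) • w c - γ • S‖ ^ 2
      = (1 + γ) ^ 2 * ‖w c‖ ^ 2 - 2 * (1 + γ) * γ * ⟪w c, S⟫ + γ ^ 2 * ‖S‖ ^ 2 := by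
    intro c
    rw [norm_sub_sq_real, norm_smul, norm_smul, inner_smul_left, inner_smul_right, mul_pow,
      mul_pow, Real.norm_eq_abs, Real.norm_eq_abs, sq_abs, sq_abs]
    simp only [conj_trivial]
    ring
  have hin : ∑ c, ⟪w c, S⟫ = ‖S‖ ^ 2 := by
    rw [← sum_inner, ← hS, real_inner_self_eq_norm_sq]
  simp only [hexp, Finset.sum_add_distrib, Finset.sum_sub_distrib, ← Finset.mul_sum, hin,
    Finset.sum_const, Finset.card_univ, Fintype.card_fin, nsmul_eq_mul]
  ring

lemma sum_norm_effective_le {E : Type*} [NormedAddCommGroup E] [InnerProductSpace ℝ E]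
    (C : ℕ) (γ : ℝ) (hγ : 0 < γ) (hγ2 : γ * ((C : ℝ) - 2) ≤ 2) (E1 : ℝ) (hE1 : 0 ≤ E1)
    (w : Fin C → E) (hw : ∀ c, ‖w c‖ ≤ E1) :
    ∑ c, ‖(1 + γ) • w c - γ • ∑ j, w j‖ ≤ C * ((1 + γ) * E1) := by
  have hsq : ∑ c, ‖w c‖ ^ 2 ≤ C * E1 ^ 2 := by
    calc ∑ c, ‖w c‖ ^ 2 ≤ ∑ _c : Fin C, E1 ^ 2 :=
          Finset.sum_le_sum fun c _ => pow_le_pow_left₀ (norm_nonneg _) (hw c) 2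
      _ = C * E1 ^ 2 := by simp
  have hcross : γ * (γ * ((C : ℝ) - 2) - 2) * ‖∑ j, w j‖ ^ 2 ≤ 0 :=
    mul_nonpos_of_nonpos_of_nonneg
      (mul_nonpos_of_nonneg_of_nonpos hγ.le (by linarith)) (sq_nonneg _)
  have hv : ∑ c, ‖(1 + γ) • w c - γ • ∑ j, w j‖ ^ 2 ≤ (1 + γ) ^ 2 * (C * E1 ^ 2) := by
    rw [sum_norm_sq_effective]
    have := mul_le_mul_of_nonneg_left hsq (sq_nonneg (1 + γ))
    linarith
  have hcs := sq_sum_le_card_mul_sum_sq (s := (Finset.univ : Finset (Fin C)))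
    (f := fun c => ‖(1 + γ) • w c - γ • ∑ j, w j‖)
  rw [Finset.card_univ, Fintype.card_fin] at hcs
  refine (pow_le_pow_iff_left₀ (by positivity) (by positivity) two_ne_zero).1 (hcs.trans ?_)
  calc (C : ℝ) * ∑ c, ‖(1 + γ) • w c - γ • ∑ j, w j‖ ^ 2
      ≤ C * ((1 + γ) ^ 2 * (C * E1 ^ 2)) := mul_le_mul_of_nonneg_left hv (by positivity)
    _ = (C * ((1 + γ) * E1)) ^ 2 := by ring

/-- **Lower bound for the average unhinged loss under norm constraints.**
For prototypes `w c` with `‖w c‖ ≤ E1` and features `h i c` with `‖h i c‖ ≤ E2`,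
the average unhinged loss is at least `-(1+γ)·E1·E2`. -/
theorem unhinged_loss_lower_bound
    (C N p : ℕ) (hC : 2 ≤ C) (hN : 1 ≤ N) (hp : 1 ≤ p)
    (γ : ℝ) (hγ : 0 < γ) (hγ2 : γ * ((C : ℝ) - 2) ≤ 2)
    (E1 E2 : ℝ) (hE1 : 0 ≤ E1) (hE2 : 0 ≤ E2)
    (w : Fin C → EuclideanSpace ℝ (Fin p))
    (h : Fin N → Fin C → EuclideanSpace ℝ (Fin p))
    (hw : ∀ c, ‖w c‖ ≤ E1)
    (hh : ∀ i c, ‖h i c‖ ≤ E2) :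
    (1 / ((C : ℝ) * N)) *
      ∑ i : Fin N, ∑ c : Fin C,
        (-⟪w c, h i c⟫ + γ * ∑ j ∈ Finset.univ.erase c, ⟪w j, h i c⟫)
      ≥ -((1 + γ) * E1 * E2) := by
  have hterm : ∀ i c, -(‖(1 + γ) • w c - γ • ∑ j, w j‖ * E2)
      ≤ -⟪w c, h i c⟫ + γ * ∑ j ∈ Finset.univ.erase c, ⟪w j, h i c⟫ := by
    intro i c
    have hsplit := Finset.add_sum_erase Finset.univ (fun j => ⟪w j, h i c⟫) (Finset.mem_univ c)
    have hinner : ⟪(1 + γ) • w c - γ • ∑ j, w j, h i c⟫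
        = (1 + γ) * ⟪w c, h i c⟫ - γ * ∑ j, ⟪w j, h i c⟫ := by
      rw [inner_sub_left, real_inner_smul_left, real_inner_smul_left, sum_inner]
    have hcs := (real_inner_le_norm ((1 + γ) • w c - γ • ∑ j, w j) (h i c)).trans
      (mul_le_mul_of_nonneg_left (hh i c) (norm_nonneg _))
    rw [hinner, ← hsplit] at hcs
    linarith
  have hsum : ∀ i, -(C * ((1 + γ) * E1) * E2)
      ≤ ∑ c : Fin C, (-⟪w c, h i c⟫ + γ * ∑ j ∈ Finset.univ.erase c, ⟪w j, h i c⟫) := by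
    intro i
    refine le_trans ?_ (Finset.sum_le_sum fun c _ => hterm i c)
    rw [Finset.sum_neg_distrib, ← Finset.sum_mul]
    exact neg_le_neg (mul_le_mul_of_nonneg_right
      (sum_norm_effective_le C γ hγ hγ2 E1 hE1 w hw) hE2)
  have htot := Finset.sum_le_sum fun (i : Fin N) (_ : i ∈ Finset.univ) => hsum i
  rw [Finset.sum_const, Finset.card_univ, Fintype.card_fin, nsmul_eq_mul] at htot
  have hC0 : (0 : ℝ) < C := by exact_mod_cast (by omega : 0 < C)
  have hN0 : (0 : ℝ) < N := by exact_mod_cast (by omega : 0 < N)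
  rw [ge_iff_le, one_div_mul_eq_div, le_div_iff₀ (mul_pos hC0 hN0)]
  refine le_trans (le_of_eq ?_) htot
  ring
end

section
/- Let C ≥ 2, N ≥ 1, p ≥ 1 be integers, let γ > 0 satisfy γ·(C−2) ≤ 2, let E1 > 0 and E2 ≥ 0. Suppose w_1,…,w_C ∈ ℝ^p satisfy ‖w_c‖₂ = E1 for all c ∈ [C] and ⟨w_i, w_j⟩ = −E1²/(C−1) for all i ≠ j, and set h_{i,c} = (E2/E1)·w_c for all i ∈ [N], c ∈ [C]. Then (1/(C·N)) · Σ_{i=1}^{N} Σ_{c=1}^{C} ( −⟨w_c, h_{i,c}⟩ + γ · Σ_{j≠c} ⟨w_j, h_{i,c}⟩ ) = −(1+γ)·E1·E2; consequently this configuration attains the minimum of the average unhinged loss over all choices of prototypes with ‖w_c‖₂ ≤ E1 and features with ‖h_{i,c}‖₂ ≤ E2. -/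
/-!
Write `S = ∑ c, w c` and `v c = (1 + γ) • w c - γ • S`. The loss of a single feature `h` of class
`c` is `-⟪v c, h⟫`, hence at least `-‖v c‖ * E2` by Cauchy–Schwarz. Expanding squares,
`∑ c, ‖v c‖² = (1 + γ)² ∑ c, ‖w c‖² + γ (γ (C - 2) - 2) ‖S‖²` (`sum_norm_sq_eq`);
the condition `γ (C - 2) ≤ 2` makes the last term nonpositive, so the root mean square of
the `‖v c‖` is at most
`(1 + γ) E1`; so is their mean (`sum_norm_le`). This yields the lower bound `-(1 + γ) E1 E2`
(`neg_le_avgUnhingedLoss`), which a direct computation shows to be the value at the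
neural collapse configuration.
-/

open scoped BigOperators
open RealInnerProductSpace

/-- The average unhinged loss of a configuration of prototypes and features. -/
noncomputable def avgUnhingedLoss (C N p : ℕ) (γ : ℝ)
    (w : Fin C → EuclideanSpace ℝ (Fin p))
    (h : Fin N → Fin C → EuclideanSpace ℝ (Fin p)) : ℝ :=
  (1 / ((C : ℝ) * N)) *
    ∑ i : Fin N, ∑ c : Fin C,
      (-⟪w c, h i c⟫ + γ * ∑ j ∈ Finset.univ.erase c, ⟪w j, h i c⟫)

section Bounds

variable {C N p : ℕ}

/-- The loss of one feature is linear in that feature, with the sum over the other classes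
completed to a sum over all classes. -/
lemma unhinged_term_eq (γ : ℝ) (w : Fin C → EuclideanSpace ℝ (Fin p))
    (x : EuclideanSpace ℝ (Fin p)) (c : Fin C) :
    -⟪w c, x⟫ + γ * ∑ j ∈ Finset.univ.erase c, ⟪w j, x⟫
      = -⟪(1 + γ) • w c - γ • ∑ j, w j, x⟫ := by
  have hsum := Finset.add_sum_erase Finset.univ (fun j => ⟪w j, x⟫) (Finset.mem_univ c)
  rw [inner_sub_left, real_inner_smul_left, real_inner_smul_left, sum_inner, ← hsum]
  ring

lemma sum_norm_sq_eq (γ : ℝ) (w : Fin C → EuclideanSpace ℝ (Fin p)) :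
    ∑ c, ‖(1 + γ) • w c - γ • ∑ j, w j‖ ^ 2
      = (1 + γ) ^ 2 * ∑ c, ‖w c‖ ^ 2
        + γ * (γ * ((C : ℝ) - 2) - 2) * ‖∑ j, w j‖ ^ 2 := by
  set S := ∑ j, w j with hS
  have hterm : ∀ c, ‖(1 + γ) • w c - γ • S‖ ^ 2
      = (1 + γ) ^ 2 * ‖w c‖ ^ 2 - 2 * (1 + γ) * γ * ⟪w c, S⟫ + γ ^ 2 * ‖S‖ ^ 2 := by
    intro c
    rw [norm_sub_sq_real, norm_smul, norm_smul, real_inner_smul_left, real_inner_smul_right,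
      mul_pow, mul_pow, Real.norm_eq_abs, Real.norm_eq_abs, sq_abs, sq_abs]
    ring
  have hinner : ∑ c, ⟪w c, S⟫ = ‖S‖ ^ 2 := by
    rw [← sum_inner, ← hS, real_inner_self_eq_norm_sq]
  simp only [hterm, Finset.sum_add_distrib, Finset.sum_sub_distrib, ← Finset.mul_sum, hinner,
    Finset.sum_const, Finset.card_univ, Fintype.card_fin, nsmul_eq_mul]
  ring

lemma sum_norm_le {γ E1 : ℝ} (hγ : 0 < γ) (hγ2 : γ * ((C : ℝ) - 2) ≤ 2) (hE1 : 0 < E1)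
    (w : Fin C → EuclideanSpace ℝ (Fin p)) (hw : ∀ c, ‖w c‖ ≤ E1) :
    ∑ c, ‖(1 + γ) • w c - γ • ∑ j, w j‖ ≤ C * ((1 + γ) * E1) := by
  have hK : 0 < (1 + γ) * E1 := by positivity
  have hw2 : ∑ c, ‖w c‖ ^ 2 ≤ C * E1 ^ 2 := by
    have hle : ∑ c, ‖w c‖ ^ 2 ≤ ∑ _c : Fin C, E1 ^ 2 :=
      Finset.sum_le_sum fun c _ => pow_le_pow_left₀ (norm_nonneg _) (hw c) 2
    simpa using hle
  have hsq : ∑ c, ‖(1 + γ) • w c - γ • ∑ j, w j‖ ^ 2 ≤ C * ((1 + γ) * E1) ^ 2 := by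
    rw [sum_norm_sq_eq]
    have hS : γ * (γ * ((C : ℝ) - 2) - 2) * ‖∑ j, w j‖ ^ 2 ≤ 0 :=
      mul_nonpos_of_nonpos_of_nonneg
        (mul_nonpos_of_nonneg_of_nonpos hγ.le (by linarith)) (by positivity)
    have hmul := mul_le_mul_of_nonneg_left hw2 (sq_nonneg (1 + γ))
    nlinarith
  -- Bound the mean by the root mean square through `2 K t ≤ t² + K²` with `K = (1 + γ) E1`.
  have hamgm : ∑ c, 2 * ((1 + γ) * E1) * ‖(1 + γ) • w c - γ • ∑ j, w j‖
      ≤ ∑ c, (‖(1 + γ) • w c - γ • ∑ j, w j‖ ^ 2 + ((1 + γ) * E1) ^ 2) :=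
    Finset.sum_le_sum fun c _ => by
      nlinarith [sq_nonneg (‖(1 + γ) • w c - γ • ∑ j, w j‖ - (1 + γ) * E1)]
  rw [← Finset.mul_sum, Finset.sum_add_distrib, Finset.sum_const, Finset.card_univ,
    Fintype.card_fin, nsmul_eq_mul] at hamgm
  refine le_of_mul_le_mul_left ?_ (mul_pos two_pos hK)
  nlinarith

lemma neg_le_avgUnhingedLoss (hC : 2 ≤ C) (hN : 1 ≤ N) {γ E1 E2 : ℝ} (hγ : 0 < γ)
    (hγ2 : γ * ((C : ℝ) - 2) ≤ 2) (hE1 : 0 < E1) (hE2 : 0 ≤ E2)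
    (w : Fin C → EuclideanSpace ℝ (Fin p)) (h : Fin N → Fin C → EuclideanSpace ℝ (Fin p))
    (hw : ∀ c, ‖w c‖ ≤ E1) (hh : ∀ i c, ‖h i c‖ ≤ E2) :
    -((1 + γ) * E1 * E2) ≤ avgUnhingedLoss C N p γ w h := by
  have hC0 : (0 : ℝ) < C := by exact_mod_cast (by omega : 0 < C)
  have hN0 : (0 : ℝ) < N := by exact_mod_cast (by omega : 0 < N)
  have hrow : ∀ i, -(C * ((1 + γ) * E1) * E2)
      ≤ ∑ c, (-⟪w c, h i c⟫ + γ * ∑ j ∈ Finset.univ.erase c, ⟪w j, h i c⟫) := by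
    intro i
    simp only [unhinged_term_eq]
    rw [Finset.sum_neg_distrib, neg_le_neg_iff]
    calc ∑ c, ⟪(1 + γ) • w c - γ • ∑ j, w j, h i c⟫
        ≤ ∑ c, ‖(1 + γ) • w c - γ • ∑ j, w j‖ * E2 :=
          Finset.sum_le_sum fun c _ => (real_inner_le_norm _ _).trans
            (mul_le_mul_of_nonneg_left (hh i c) (norm_nonneg _))
      _ = (∑ c, ‖(1 + γ) • w c - γ • ∑ j, w j‖) * E2 := by rw [Finset.sum_mul]
      _ ≤ C * ((1 + γ) * E1) * E2 :=
          mul_le_mul_of_nonneg_right (sum_norm_le hγ hγ2 hE1 w hw) hE2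
  have htotal := Finset.sum_le_sum fun i (_ : i ∈ (Finset.univ : Finset (Fin N))) => hrow i
  rw [Finset.sum_const, Finset.card_univ, Fintype.card_fin, nsmul_eq_mul] at htotal
  unfold avgUnhingedLoss
  rw [one_div, inv_mul_eq_div, le_div_iff₀ (mul_pos hC0 hN0)]
  linarith

end Bounds

/-- **Neural collapse configurations attain the minimum of the unhinged loss.**
If the prototypes form a simplex ETF of norm `E1` and every feature is the positively
aligned multiple `(E2/E1)·w c` of its class prototype, then the average unhinged loss
equals `-(1+γ)·E1·E2`, and this value is a minimum over all norm-bounded configurations. -/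
theorem unhinged_loss_neural_collapse_minimizer
    (C N p : ℕ) (hC : 2 ≤ C) (hN : 1 ≤ N) (hp : 1 ≤ p)
    (γ : ℝ) (hγ : 0 < γ) (hγ2 : γ * ((C : ℝ) - 2) ≤ 2)
    (E1 E2 : ℝ) (hE1 : 0 < E1) (hE2 : 0 ≤ E2)
    (w : Fin C → EuclideanSpace ℝ (Fin p))
    (h : Fin N → Fin C → EuclideanSpace ℝ (Fin p))
    (hw : ∀ c, ‖w c‖ = E1)
    (hww : ∀ i j, i ≠ j → ⟪w i, w j⟫ = -(E1 ^ 2) / ((C : ℝ) - 1))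
    (hh : ∀ (i : Fin N) (c : Fin C), h i c = (E2 / E1) • w c) :
    avgUnhingedLoss C N p γ w h = -((1 + γ) * E1 * E2) ∧
    ∀ (w' : Fin C → EuclideanSpace ℝ (Fin p))
      (h' : Fin N → Fin C → EuclideanSpace ℝ (Fin p)),
      (∀ c, ‖w' c‖ ≤ E1) → (∀ i c, ‖h' i c‖ ≤ E2) →
      avgUnhingedLoss C N p γ w h ≤ avgUnhingedLoss C N p γ w' h' := by
  have hC0 : (C : ℝ) ≠ 0 := by exact_mod_cast (by omega : C ≠ 0)
  have hN0 : (N : ℝ) ≠ 0 := by exact_mod_cast (by omega : N ≠ 0)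
  have hC1 : (C : ℝ) - 1 ≠ 0 := by
    have : (2 : ℝ) ≤ C := by exact_mod_cast hC
    linarith
  have hterm : ∀ i c, -⟪w c, h i c⟫ + γ * ∑ j ∈ Finset.univ.erase c, ⟪w j, h i c⟫
      = -((1 + γ) * E1 * E2) := by
    intro i c
    have hoff : ∑ j ∈ Finset.univ.erase c, ⟪w j, h i c⟫ = -(E1 * E2) := by
      have hconst : ∀ j ∈ Finset.univ.erase c,
          ⟪w j, h i c⟫ = E2 / E1 * (-(E1 ^ 2) / ((C : ℝ) - 1)) := by
        intro j hj
        rw [hh, real_inner_smul_right, hww j c (Finset.ne_of_mem_erase hj)]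
      rw [Finset.sum_congr rfl hconst, Finset.sum_const,
        Finset.card_erase_of_mem (Finset.mem_univ c), Finset.card_univ, Fintype.card_fin,
        nsmul_eq_mul, Nat.cast_sub (by omega), Nat.cast_one]
      field_simp
    rw [hoff, hh, real_inner_smul_right, real_inner_self_eq_norm_sq, hw]
    field_simp
    ring
  have hval : avgUnhingedLoss C N p γ w h = -((1 + γ) * E1 * E2) := by
    unfold avgUnhingedLoss
    simp only [hterm, Finset.sum_const, Finset.card_univ, Fintype.card_fin, nsmul_eq_mul]
    field_simp
  refine ⟨hval, fun w' h' hw' hh' => ?_⟩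
  rw [hval]
  exact neg_le_avgUnhingedLoss hC hN hγ hγ2 hE1 hE2 w' h' hw' hh'
end

section
/- Fix integers C, N, p ≥ 1, a real γ, and ε ∈ {+1, −1}. Let W ∈ ℝ^{p×C} satisfy W·1_C = 0, and let H ∈ ℝ^{p×(CN)} be H = (ε/√N)·(W ⊗ 1_N^T), i.e., the column of H indexed by (c,i) equals (ε/√N) times the c-th column of W. Then W·M = (ε·(1+γ)/(C·√N))·H and H·M^T = (ε·(1+γ)/(C·√N))·W; in other words, (H, W) is an eigenvector of the block operator (H,W) ↦ (W·M, H·M^T) with eigenvalue ε·(1+γ)/(C·√N). -/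
/-!
The matrix `M` is a multiple of `I_C ⊗ 1_Nᵀ` plus a multiple of the all-ones matrix. The latter is
annihilated by `W` because the rows of `W` sum to zero, and likewise by `H`, whose columns repeat
those of `W`. What remains gives `W M = (1+γ)/(CN) · (W ⊗ 1_Nᵀ)` and, after summing the `N` equal
columns, `H Mᵀ = (ε/√N) (1+γ)/C · W`; the first is the required multiple of `H` since `ε² = 1`.
-/

open scoped BigOperators Matrix

noncomputable section

/-- The matrix `M = (1/(CN))·((1+γ)·(I_C ⊗ 1_Nᵀ) − γ·1_C·1_{CN}ᵀ)`,
with columns indexed by pairs `(c', i) ∈ [C]×[N]`. -/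
def Mmat (C N : ℕ) (γ : ℝ) : Matrix (Fin C) (Fin C × Fin N) ℝ :=
  Matrix.of fun c ci => ((1 + γ) * (if c = ci.1 then 1 else 0) - γ) / ((C : ℝ) * N)

/-- `W ⊗ 1_Nᵀ`: the `p × (C·N)` matrix whose column indexed by `(c, i)` is the
`c`-th column of `W`. -/
def colRep {p C : ℕ} (N : ℕ) (W : Matrix (Fin p) (Fin C) ℝ) :
    Matrix (Fin p) (Fin C × Fin N) ℝ :=
  Matrix.of fun i ci => W i ci.1

/-- **Eigenvectors of the block operator from the subspace `E₁^ε`.**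
If `W·1_C = 0` and `H = (ε/√N)·(W ⊗ 1_Nᵀ)`, then `(H, W)` is an eigenvector of
`(H, W) ↦ (W·M, H·Mᵀ)` with eigenvalue `ε·(1+γ)/(C·√N)`. -/
theorem eigenvector_E1
    (C N p : ℕ) (hC : 1 ≤ C) (hN : 1 ≤ N) (hp : 1 ≤ p)
    (γ ε : ℝ) (hε : ε = 1 ∨ ε = -1)
    (W : Matrix (Fin p) (Fin C) ℝ)
    (hW : W *ᵥ (fun _ => (1 : ℝ)) = 0)
    (H : Matrix (Fin p) (Fin C × Fin N) ℝ)
    (hH : H = (ε / Real.sqrt N) • colRep N W) :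
    W * Mmat C N γ = (ε * (1 + γ) / ((C : ℝ) * Real.sqrt N)) • H ∧
    H * (Mmat C N γ)ᵀ = (ε * (1 + γ) / ((C : ℝ) * Real.sqrt N)) • W := by
  have hrow : ∀ i, ∑ c, W i c = 0 := fun i => by
    simpa [Matrix.mulVec, dotProduct] using congrFun hW i
  have hN0 : (0 : ℝ) < N := by exact_mod_cast hN
  have hC0 : (C : ℝ) ≠ 0 := by exact_mod_cast (by omega : C ≠ 0)
  have hs0 : Real.sqrt N ≠ 0 := (Real.sqrt_pos.mpr hN0).ne'
  have hs2 : Real.sqrt N ^ 2 = N := Real.sq_sqrt hN0.le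
  have hε2 : ε ^ 2 = 1 := by rcases hε with h | h <;> simp [h]
  -- The `γ`-part of `M` is constant in `c`, so it only sees the row sums of `W`.
  have key : ∀ i c', ∑ c, W i c * (((1 + γ) * (if c = c' then 1 else 0) - γ) / ((C : ℝ) * N))
      = (1 + γ) / ((C : ℝ) * N) * W i c' := fun i c' => by
    have h : ∀ c, W i c * (((1 + γ) * (if c = c' then 1 else 0) - γ) / ((C : ℝ) * N))
        = (1 + γ) / ((C : ℝ) * N) * (if c = c' then W i c else 0)
          - γ / ((C : ℝ) * N) * W i c := fun c => by
      split_ifs <;> ring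
    simp only [h, Finset.sum_sub_distrib, ← Finset.mul_sum, hrow]
    simp
  subst hH
  constructor
  · ext i ⟨c, j⟩
    simp only [Matrix.mul_apply, Mmat, colRep, Matrix.of_apply, Matrix.smul_apply, smul_eq_mul, key]
    field_simp
    rw [hε2, hs2]
    ring
  · ext i c
    have h : ∀ x : Fin C, ε / Real.sqrt N * W i x *
          (((1 + γ) * (if c = x then 1 else 0) - γ) / ((C : ℝ) * N))
        = ε / Real.sqrt N *
          (W i x * (((1 + γ) * (if x = c then 1 else 0) - γ) / ((C : ℝ) * N))) := fun x => by
      simp only [eq_comm (a := c)]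
      ring
    rw [Matrix.mul_apply, Fintype.sum_prod_type]
    -- Beta-reduced form, in which the decidability instance no longer mentions the index `Fin N`.
    change ∑ x : Fin C, ∑ _j : Fin N, ε / Real.sqrt N * W i x *
      (((1 + γ) * (if c = x then 1 else 0) - γ) / ((C : ℝ) * N)) = _
    simp only [h, Finset.sum_const, Finset.card_univ, Fintype.card_fin, nsmul_eq_mul,
      ← Finset.mul_sum, key, Matrix.smul_apply, smul_eq_mul]
    field_simp
end
end

section
/- Fix integers C, N, p ≥ 1 and let V = ℝ^{p×(CN)} × ℝ^{p×C}, with columns of the first factor indexed by pairs (c,i) ∈ [C]×[N]. Define the linear subspaces E1^ε = {(H,W) ∈ V : W·1_C = 0 and H = (ε/√N)·(W ⊗ 1_N^T)} for ε ∈ {+1,−1}; E2^ε = {((ε/√N)·h·1_{CN}^T, h·1_C^T) : h ∈ ℝ^p} for ε ∈ {+1,−1}; and E3 = {(H, 0) ∈ V : H·(I_C ⊗ 1_N) = 0}. Then: (a) whenever (H1,W1) and (H2,W2) belong to two distinct subspaces among E1^+, E1^−, E2^+, E2^−, E3, one has H1·H2^T + W1·W2^T = 0 (the p×p zero matrix),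 so the five subspaces are pairwise orthogonal with respect to the inner product ⟨(H,W),(H',W')⟩ = Tr(H·H'^T) + Tr(W·W'^T); (b) every (H,W) ∈ V is a sum of five elements, one from each of E1^+, E1^−, E2^+, E2^−, E3. -/
/-!
Write `K = I_C ⊗ 1_N`. Then `W ⊗ 1_Nᵀ = W Kᵀ` and `Kᵀ K = N • 1`. All four of `E₁^±`, `E₂^±` lie
in the graphs `D^ε = {(H, W) : H = (ε/√N) W Kᵀ}`, and for `(H₁, W₁) ∈ D^ε`, `(H₂, W₂) ∈ D^δ`
one has `H₁ H₂ᵀ + W₁ W₂ᵀ = (1 + ε δ) W₁ W₂ᵀ`. This vanishes for opposite signs, and also for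
`E₁` against `E₂`, where `W₁ 1_C = 0` while `W₂ᵀ` has constant columns. Orthogonality to `E₃`
follows from `H (W Kᵀ)ᵀ = (H K) Wᵀ = 0`.

For the decomposition, put `M = (1/√N) H K`. The elements of `D^±` over `(W ± M)/2` add up to
`((1/√N) M Kᵀ, W)`, and the remainder `(H - (1/√N) M Kᵀ, 0)` lies in `E₃` since `Kᵀ K = N • 1`.
Finally `D^ε = E₁^ε + E₂^ε` by splitting off the mean of the columns of `W`.
-/

open scoped BigOperators Matrix

noncomputable section

/-- `I_C ⊗ 1_N`: the `(C·N) × C` matrix with entry `1` in position `((c,i), c)`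
and `0` elsewhere. -/
def Kmat (C N : ℕ) : Matrix (Fin C × Fin N) (Fin C) ℝ :=
  Matrix.of fun ci c => if ci.1 = c then 1 else 0

/-- The subspace `E₁^ε = {(H, W) : W·1_C = 0, H = (ε/√N)·(W ⊗ 1_Nᵀ)}`. -/
def E1set (C N p : ℕ) (ε : ℝ) :
    Set (Matrix (Fin p) (Fin C × Fin N) ℝ × Matrix (Fin p) (Fin C) ℝ) :=
  {z | z.2 *ᵥ (fun _ => (1 : ℝ)) = 0 ∧ z.1 = (ε / Real.sqrt N) • colRep N z.2}

/-- The subspace `E₂^ε = {((ε/√N)·h·1_{CN}ᵀ, h·1_Cᵀ) : h ∈ ℝ^p}`. -/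
def E2set (C N p : ℕ) (ε : ℝ) :
    Set (Matrix (Fin p) (Fin C × Fin N) ℝ × Matrix (Fin p) (Fin C) ℝ) :=
  {z | ∃ h : Fin p → ℝ,
    z.1 = Matrix.of (fun i (_ : Fin C × Fin N) => (ε / Real.sqrt N) * h i) ∧
    z.2 = Matrix.of (fun i (_ : Fin C) => h i)}

/-- The subspace `E₃ = {(H, 0) : H·(I_C ⊗ 1_N) = 0}`. -/
def E3set (C N p : ℕ) :
    Set (Matrix (Fin p) (Fin C × Fin N) ℝ × Matrix (Fin p) (Fin C) ℝ) :=
  {z | z.1 * Kmat C N = 0 ∧ z.2 = 0}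

theorem colRep_eq_mul {p C : ℕ} (N : ℕ) (W : Matrix (Fin p) (Fin C) ℝ) :
    colRep N W = W * (Kmat C N)ᵀ := by
  ext i c
  simp [colRep, Kmat, Matrix.mul_apply]

theorem Kmat_transpose_mul (C N : ℕ) :
    (Kmat C N)ᵀ * Kmat C N = (N : ℝ) • (1 : Matrix (Fin C) (Fin C) ℝ) := by
  ext c d
  simp only [Kmat, Matrix.mul_apply, Matrix.transpose_apply, Matrix.of_apply,
    Fintype.sum_prod_type, Matrix.smul_apply, Matrix.one_apply, smul_eq_mul]
  by_cases h : c = d <;> simp [h, eq_comm (a := d)]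

/-- The subspace `D^ε = {(H, W) : H = (ε/√N)·(W ⊗ 1_Nᵀ)}`, which contains `E₁^ε` and `E₂^ε`. -/
def Dset (C N p : ℕ) (ε : ℝ) :
    Set (Matrix (Fin p) (Fin C × Fin N) ℝ × Matrix (Fin p) (Fin C) ℝ) :=
  {z | z.1 = (ε / Real.sqrt N) • colRep N z.2}

theorem E1set_subset_Dset (C N p : ℕ) (ε : ℝ) : E1set C N p ε ⊆ Dset C N p ε :=
  fun _ h => h.2

theorem E2set_subset_Dset (C N p : ℕ) (ε : ℝ) : E2set C N p ε ⊆ Dset C N p ε := by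
  rintro ⟨H, W⟩ ⟨h, h1, h2⟩
  simp only at h1 h2
  subst h1 h2
  ext i c
  simp [colRep]

theorem Dset_pairing {C N p : ℕ} (hN : 1 ≤ N) {ε δ : ℝ}
    {z w : Matrix (Fin p) (Fin C × Fin N) ℝ × Matrix (Fin p) (Fin C) ℝ}
    (hz : z ∈ Dset C N p ε) (hw : w ∈ Dset C N p δ) :
    z.1 * w.1ᵀ + z.2 * w.2ᵀ = (1 + ε * δ) • (z.2 * w.2ᵀ) := by
  have hN' : (0 : ℝ) < N := by exact_mod_cast hN
  have hs : Real.sqrt N * Real.sqrt N = N := Real.mul_self_sqrt hN'.le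
  have hs0 : Real.sqrt N ≠ 0 := (Real.sqrt_pos.2 hN').ne'
  have key : z.2 * (Kmat C N)ᵀ * (Kmat C N * w.2ᵀ) = (N : ℝ) • (z.2 * w.2ᵀ) := by
    rw [Matrix.mul_assoc, ← Matrix.mul_assoc _ _ w.2ᵀ, Kmat_transpose_mul]
    simp
  have hc : (ε / Real.sqrt N) * (δ / Real.sqrt N) * N = ε * δ := by
    field_simp
    rw [pow_two, hs]
    ring
  rw [hz, hw, colRep_eq_mul, colRep_eq_mul, Matrix.transpose_smul, Matrix.transpose_mul,
    Matrix.transpose_transpose, Matrix.smul_mul, Matrix.mul_smul, key, smul_smul, smul_smul, hc,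
    add_smul, one_smul, add_comm]

theorem E1set_E2set_orthogonal {C N p : ℕ} (hN : 1 ≤ N) {ε δ : ℝ}
    {z w : Matrix (Fin p) (Fin C × Fin N) ℝ × Matrix (Fin p) (Fin C) ℝ}
    (hz : z ∈ E1set C N p ε) (hw : w ∈ E2set C N p δ) :
    z.1 * w.1ᵀ + z.2 * w.2ᵀ = 0 := by
  rw [Dset_pairing hN (E1set_subset_Dset _ _ _ _ hz) (E2set_subset_Dset _ _ _ _ hw)]
  obtain ⟨h, -, h2⟩ := hw
  have : z.2 * w.2ᵀ = 0 := by
    ext i j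
    have := congrFun hz.1 i
    simp only [Matrix.mulVec, dotProduct, mul_one, Pi.zero_apply] at this
    simp [h2, Matrix.mul_apply, ← Finset.sum_mul, this]
  rw [this, smul_zero]

theorem Dset_opposite_orthogonal {C N p : ℕ} (hN : 1 ≤ N) {ε δ : ℝ} (h : 1 + ε * δ = 0)
    {z w : Matrix (Fin p) (Fin C × Fin N) ℝ × Matrix (Fin p) (Fin C) ℝ}
    (hz : z ∈ Dset C N p ε) (hw : w ∈ Dset C N p δ) :
    z.1 * w.1ᵀ + z.2 * w.2ᵀ = 0 := by
  rw [Dset_pairing hN hz hw, h, zero_smul]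

theorem E3set_Dset_orthogonal {C N p : ℕ} {δ : ℝ}
    {z w : Matrix (Fin p) (Fin C × Fin N) ℝ × Matrix (Fin p) (Fin C) ℝ}
    (hz : z ∈ E3set C N p) (hw : w ∈ Dset C N p δ) :
    z.1 * w.1ᵀ + z.2 * w.2ᵀ = 0 := by
  rw [hw, colRep_eq_mul, hz.2, Matrix.transpose_smul, Matrix.transpose_mul,
    Matrix.transpose_transpose, Matrix.mul_smul, ← Matrix.mul_assoc, hz.1]
  simp

theorem pairing_symm {C N p : ℕ}
    {z w : Matrix (Fin p) (Fin C × Fin N) ℝ × Matrix (Fin p) (Fin C) ℝ}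
    (h : z.1 * w.1ᵀ + z.2 * w.2ᵀ = 0) : w.1 * z.1ᵀ + w.2 * z.2ᵀ = 0 := by
  simpa [Matrix.transpose_mul] using congrArg Matrix.transpose h

/-- Splitting off the mean of the columns of `W` shows `D^ε ⊆ E₁^ε + E₂^ε`. -/
theorem Dset_split {C N p : ℕ} (hC : 1 ≤ C) (ε : ℝ) (W : Matrix (Fin p) (Fin C) ℝ) :
    ∃ z ∈ E1set C N p ε, ∃ w ∈ E2set C N p ε,
      ((ε / Real.sqrt N) • colRep N W, W) = z + w := by
  have hC' : (C : ℝ) ≠ 0 := by exact_mod_cast (by omega : C ≠ 0)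
  set m : Fin p → ℝ := fun i => (∑ c, W i c) / C with hm
  refine ⟨((ε / Real.sqrt N) • colRep N (W - Matrix.of fun i _ => m i),
    W - Matrix.of fun i _ => m i), ⟨?_, rfl⟩,
    (Matrix.of fun i _ => (ε / Real.sqrt N) * m i, Matrix.of fun i _ => m i),
    ⟨m, rfl, rfl⟩, ?_⟩
  · ext i
    simp only [Matrix.mulVec, dotProduct, mul_one, Matrix.sub_apply, Matrix.of_apply,
      Finset.sum_sub_distrib, Finset.sum_const, Finset.card_univ, Fintype.card_fin,
      nsmul_eq_mul, Pi.zero_apply, hm]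
    field_simp
    ring
  · ext i c
    · simp [colRep]
      ring
    · simp

/-- **Orthogonal decomposition into the five subspaces `E₁⁺, E₁⁻, E₂⁺, E₂⁻, E₃`.**
(a) Elements of two distinct subspaces satisfy `H₁·H₂ᵀ + W₁·W₂ᵀ = 0`, so the subspaces
are pairwise orthogonal for the trace inner product `Tr(H·H'ᵀ) + Tr(W·W'ᵀ)`.
(b) Every pair `(H, W)` decomposes as a sum of five elements, one from each subspace. -/
theorem five_subspaces_orthogonal_decomposition
    (C N p : ℕ) (hC : 1 ≤ C) (hN : 1 ≤ N) (hp : 1 ≤ p) :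
    (∀ a b : Fin 5, a ≠ b →
      ∀ z1 ∈ ![E1set C N p 1, E1set C N p (-1), E2set C N p 1,
               E2set C N p (-1), E3set C N p] a,
      ∀ z2 ∈ ![E1set C N p 1, E1set C N p (-1), E2set C N p 1,
               E2set C N p (-1), E3set C N p] b,
        z1.1 * z2.1ᵀ + z1.2 * z2.2ᵀ = 0) ∧
    (∀ z : Matrix (Fin p) (Fin C × Fin N) ℝ × Matrix (Fin p) (Fin C) ℝ,
      ∃ z1 ∈ E1set C N p 1, ∃ z2 ∈ E1set C N p (-1), ∃ z3 ∈ E2set C N p 1,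
      ∃ z4 ∈ E2set C N p (-1), ∃ z5 ∈ E3set C N p,
        z = z1 + z2 + z3 + z4 + z5) := by
  refine ⟨?_, ?_⟩
  · intro a b hab z hz w hw
    have h1 := fun ε => E1set_subset_Dset C N p ε
    have h2 := fun ε => E2set_subset_Dset C N p ε
    fin_cases a <;> fin_cases b <;> first
      | exact absurd rfl hab
      | exact E1set_E2set_orthogonal hN hz hw
      | exact pairing_symm (E1set_E2set_orthogonal hN hw hz)
      | exact Dset_opposite_orthogonal hN (by norm_num) (h1 _ hz) (h1 _ hw)
      | exact Dset_opposite_orthogonal hN (by norm_num) (h2 _ hz) (h2 _ hw)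
      | exact E3set_Dset_orthogonal hz (h1 _ hw)
      | exact E3set_Dset_orthogonal hz (h2 _ hw)
      | exact pairing_symm (E3set_Dset_orthogonal hw (h1 _ hz))
      | exact pairing_symm (E3set_Dset_orthogonal hw (h2 _ hz))
  · rintro ⟨H, W⟩
    have hN' : (0 : ℝ) < N := by exact_mod_cast hN
    have hs : Real.sqrt N * Real.sqrt N = N := Real.mul_self_sqrt hN'.le
    have hs0 : Real.sqrt N ≠ 0 := (Real.sqrt_pos.2 hN').ne'
    set M := (1 / Real.sqrt N) • (H * Kmat C N) with hM
    obtain ⟨z1, hz1, z3, hz3, hp1⟩ := Dset_split (N := N) hC 1 ((1 / 2 : ℝ) • (W + M))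
    obtain ⟨z2, hz2, z4, hz4, hp2⟩ := Dset_split (N := N) hC (-1) ((1 / 2 : ℝ) • (W - M))
    refine ⟨z1, hz1, z2, hz2, z3, hz3, z4, hz4,
      (H - (1 / Real.sqrt N) • colRep N M, 0), ⟨?_, rfl⟩, ?_⟩
    · have hc : 1 / Real.sqrt N * N * (1 / Real.sqrt N) = 1 := by
        field_simp
        rw [pow_two, hs]
      simp only
      rw [colRep_eq_mul, Matrix.sub_mul, Matrix.smul_mul, Matrix.mul_assoc, Kmat_transpose_mul,
        Matrix.mul_smul, Matrix.mul_one, hM, smul_smul, smul_smul, hc, one_smul, sub_self]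
    · have hsum : z1 + z2 + z3 + z4 = (z1 + z3) + (z2 + z4) := by abel
      rw [hsum, ← hp1, ← hp2]
      ext i c
      · simp [colRep]
        ring
      · simp
        ring
end
end

section
/- Fix integers C, N, p ≥ 1 and a real γ with either C = 2 and γ > 0, or C > 2 and 0 < γ < 2/(C−2). Let s > 0, let η2 : ℝ → ℝ be continuous with η2(t) > 0 for all t, set η1 = s·η2, ζ_k(t) = ∫_0^t η_k(τ) dτ, and assume ζ1(t) → ∞ as t → ∞. Suppose H : ℝ → ℝ^{p×(CN)}, W : ℝ → ℝ^{p×C} are continuously differentiable and satisfy H'(t) = η1(t)·W(t)·M − λ·η1(t)·H(t) and W'(t) = η2(t)·H(t)·M^T − λ·η2(t)·W(t) for all t ≥ 0, where λ = (1+γ)/(C·√N). Define P^ε, H1^ε, W1^ε from H(0), W(0) as in the context. Then, in Frobenius norm, H(t) → H1^+ + ((1−s)/(1+s))·H1^− and W(t) → W1^+ − ((1−s)/(1+s))·W1^− as t → ∞. -/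
/-!
The rows of `H` and `W` evolve independently. Fix a row and put `r = √N`, `a = lam`, `b = γ/(C r)`.
With `G_c = (∑ₙ h_{c,n})/r` the system for `(G, w)` is the symmetric one
`G' = s η (a w − b ∑w − a G)`, `w' = η (a G − b ∑G − a w)`, and splits into three parts:

* the class sums `(∑G, ∑w)` decay to `0`, because the hypothesis on `γ` gives
  `|a − C b| < a`, so that `(∑G)² + s (∑w)²` is a strict Lyapunov function (`pair_tendsto_zero`);
* the centred part of `G − w` decays like `exp(−(1+s) a ∫η)`;
* the centred part of `G + s w` is conserved, which singles out the limit
  `(g₀ + s v₀)/(1+s)` for both `G` and `w`, with `g₀`, `v₀` the centred initial values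
  (`class_system_tendsto`).

The within-class deviations `h_{c,n} − G_c/r` decay like `exp(−s a ∫η)`, so `h_{c,n}` has the limit of
`G_c/r`. All decay statements are instances of the Grönwall-type lemma `gronwall_tendsto_zero`.
-/

open scoped BigOperators Matrix
open Filter

noncomputable section

/-- The Frobenius norm of a real matrix. -/
def frob {m n : Type*} [Fintype m] [Fintype n] (A : Matrix m n ℝ) : ℝ :=
  Real.sqrt (∑ i, ∑ j, (A i j) ^ 2)

/-- `P^ε = (1/2)·((ε/√N)·H0·(I_C ⊗ 1_N) + W0)·(I_C − (1/C)·1_C·1_Cᵀ)`. -/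
def Pproj {p : ℕ} (C N : ℕ) (ε : ℝ) (H0 : Matrix (Fin p) (Fin C × Fin N) ℝ)
    (W0 : Matrix (Fin p) (Fin C) ℝ) : Matrix (Fin p) (Fin C) ℝ :=
  ((1 / 2 : ℝ) • ((ε / Real.sqrt N) • (H0 * Kmat C N) + W0)) *
    ((1 : Matrix (Fin C) (Fin C) ℝ) - ((C : ℝ))⁻¹ • Matrix.of fun _ _ => (1 : ℝ))

/-- `H1^ε = (ε/√N)·(P^ε ⊗ 1_Nᵀ)`. -/
def H1comp {p : ℕ} (C N : ℕ) (ε : ℝ) (H0 : Matrix (Fin p) (Fin C × Fin N) ℝ)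
    (W0 : Matrix (Fin p) (Fin C) ℝ) : Matrix (Fin p) (Fin C × Fin N) ℝ :=
  (ε / Real.sqrt N) • colRep N (Pproj C N ε H0 W0)

/-- Grönwall decay in the time scale `∫ η`: since `E · exp(κ ∫ η)` is nonincreasing, `E` is at most
`E 0 · exp(−κ ∫ η)`. -/
lemma gronwall_tendsto_zero {η E E' : ℝ → ℝ} {κ : ℝ} (hη : Continuous η)
    (hζ : Tendsto (fun t : ℝ => ∫ τ in (0:ℝ)..t, η τ) atTop atTop) (hκ : 0 < κ)
    (hE : ∀ t, 0 ≤ t → HasDerivAt E (E' t) t)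
    (hle : ∀ t, 0 ≤ t → E' t ≤ -(κ * η t * E t)) (h0 : ∀ t, 0 ≤ E t) :
    Tendsto E atTop (nhds 0) := by
  set Z : ℝ → ℝ := fun t => ∫ τ in (0:ℝ)..t, η τ with hZ
  have hZd : ∀ t, HasDerivAt Z (η t) t := fun t =>
    intervalIntegral.integral_hasDerivAt_right (hη.intervalIntegrable _ _)
      (hη.stronglyMeasurableAtFilter _ _) hη.continuousAt
  have hF : ∀ t, 0 ≤ t → HasDerivAt (fun t => E t * Real.exp (κ * Z t))
      (E' t * Real.exp (κ * Z t) + E t * (Real.exp (κ * Z t) * (κ * η t))) t := fun t ht =>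
    (hE t ht).mul (((hZd t).const_mul κ).exp)
  have hanti : AntitoneOn (fun t => E t * Real.exp (κ * Z t)) (Set.Ici 0) := by
    apply antitoneOn_of_deriv_nonpos (convex_Ici 0)
    · exact fun t ht => (hF t ht).continuousAt.continuousWithinAt
    · intro t ht
      rw [interior_Ici] at ht
      exact (hF t (le_of_lt ht)).differentiableAt.differentiableWithinAt
    · intro t ht
      rw [interior_Ici] at ht
      have ht' : 0 ≤ t := le_of_lt ht
      rw [(hF t ht').deriv]
      have := mul_le_mul_of_nonneg_right (hle t ht') (Real.exp_pos (κ * Z t)).le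
      linarith
  have hexp : Tendsto (fun t => E 0 * Real.exp (-(κ * Z t))) atTop (nhds 0) := by
    have h1 : Tendsto (fun t => κ * Z t) atTop atTop := hζ.const_mul_atTop hκ
    simpa using (Real.tendsto_exp_neg_atTop_nhds_zero.comp h1).const_mul (E 0)
  refine squeeze_zero' (Eventually.of_forall h0) ?_ hexp
  filter_upwards [eventually_ge_atTop 0] with t ht
  have h2 := hanti (Set.mem_Ici.2 le_rfl) (Set.mem_Ici.2 ht) ht
  have hZ0 : Z 0 = 0 := by simp [hZ]
  simp only [hZ0, mul_zero, Real.exp_zero, mul_one] at h2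
  rw [Real.exp_neg, ← div_eq_mul_inv, le_div_iff₀ (Real.exp_pos _)]
  exact h2

lemma tendsto_zero_of_sq {f : ℝ → ℝ} (h : Tendsto (fun t => f t ^ 2) atTop (nhds 0)) :
    Tendsto f atTop (nhds 0) := by
  have h1 := (Real.continuous_sqrt.tendsto 0).comp h
  simp only [Function.comp_def, Real.sqrt_sq_eq_abs, Real.sqrt_zero] at h1
  exact (tendsto_zero_iff_abs_tendsto_zero f).2 h1

lemma linear_tendsto_zero {η f : ℝ → ℝ} {κ : ℝ} (hη : Continuous η)
    (hζ : Tendsto (fun t : ℝ => ∫ τ in (0:ℝ)..t, η τ) atTop atTop) (hκ : 0 < κ)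
    (hf : ∀ t, 0 ≤ t → HasDerivAt f (-(κ * η t * f t)) t) :
    Tendsto f atTop (nhds 0) := by
  apply tendsto_zero_of_sq
  refine gronwall_tendsto_zero (κ := 2 * κ) hη hζ (by positivity)
    (fun t ht => (hf t ht).pow 2) (fun t ht => le_of_eq ?_) (fun t => sq_nonneg _)
  push_cast
  ring

/-- The coupling `m` is dominated by the damping `a`, so `x² + s y²` is a strict Lyapunov function,
with rate `2 (a − |m|) min(s, 1)`. -/
lemma pair_tendsto_zero {η x y : ℝ → ℝ} {s a m : ℝ} (hη : Continuous η) (hpos : ∀ t, 0 < η t)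
    (hζ : Tendsto (fun t : ℝ => ∫ τ in (0:ℝ)..t, η τ) atTop atTop) (hs : 0 < s) (hm : |m| < a)
    (hx : ∀ t, 0 ≤ t → HasDerivAt x (s * η t * (m * y t - a * x t)) t)
    (hy : ∀ t, 0 ≤ t → HasDerivAt y (η t * (m * x t - a * y t)) t) :
    Tendsto x atTop (nhds 0) ∧ Tendsto y atTop (nhds 0) := by
  have hE : Tendsto (fun t => x t ^ 2 + s * y t ^ 2) atTop (nhds 0) := by
    refine gronwall_tendsto_zero (κ := 2 * ((a - |m|) * min s 1)) hη hζ
      (mul_pos two_pos (mul_pos (sub_pos.2 hm) (lt_min hs one_pos)))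
      (fun t ht => ((hx t ht).pow 2).add (((hy t ht).pow 2).const_mul s)) (fun t ht => ?_)
      (fun t => by positivity)
    have h1 : 2 * (m * (x t * y t)) ≤ |m| * (x t ^ 2 + y t ^ 2) := by
      have h2 : m * (x t * y t) ≤ |m| * (|x t| * |y t|) := by
        rw [← abs_mul, ← abs_mul]; exact le_abs_self _
      have h3 : 2 * (|x t| * |y t|) ≤ x t ^ 2 + y t ^ 2 := by
        rw [← sq_abs (x t), ← sq_abs (y t)]; nlinarith [sq_nonneg (|x t| - |y t|)]
      nlinarith [abs_nonneg m]
    have h4 : min s 1 * (x t ^ 2 + s * y t ^ 2) ≤ s * (x t ^ 2 + y t ^ 2) := by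
      have h5 := mul_le_mul_of_nonneg_right (min_le_left s 1) (sq_nonneg (x t))
      have h6 := mul_le_mul_of_nonneg_right (min_le_right s 1)
        (mul_nonneg hs.le (sq_nonneg (y t)))
      nlinarith
    have h7 := mul_le_mul_of_nonneg_left h4 (sub_pos.2 hm).le
    have h8 := mul_le_mul_of_nonneg_left h1 hs.le
    have h9 : s * (2 * (2 * (m * (x t * y t))) - 2 * a * (x t ^ 2 + y t ^ 2))
        ≤ -(2 * ((a - |m|) * min s 1) * (x t ^ 2 + s * y t ^ 2)) := by linarith
    have h10 := mul_le_mul_of_nonneg_left h9 (hpos t).le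
    push_cast
    linarith
  constructor
  · apply tendsto_zero_of_sq
    refine squeeze_zero (fun t => sq_nonneg _) (fun t => ?_) hE
    have : 0 ≤ s * y t ^ 2 := by positivity
    linarith
  · apply tendsto_zero_of_sq
    have h2 := hE.const_mul s⁻¹
    rw [mul_zero] at h2
    refine squeeze_zero (fun t => sq_nonneg _) (fun t => ?_) h2
    have : s⁻¹ * (x t ^ 2 + s * y t ^ 2) = s⁻¹ * x t ^ 2 + y t ^ 2 := by field_simp
    rw [this]
    have : 0 ≤ s⁻¹ * x t ^ 2 := by positivity
    linarith

/-- Limit of the class-level system: both `G` and `w` tend to `(g₀ + s v₀)/(1+s)`, where `g₀`, `v₀`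
are the initial values with their class averages removed. -/
lemma class_system_tendsto {C : ℕ} (hC : 1 ≤ C) {η : ℝ → ℝ} {G w : ℝ → Fin C → ℝ} {s a b : ℝ}
    (hη : Continuous η) (hpos : ∀ t, 0 < η t)
    (hζ : Tendsto (fun t : ℝ => ∫ τ in (0:ℝ)..t, η τ) atTop atTop) (hs : 0 < s)
    (hab : |a - C * b| < a)
    (hG : ∀ t, 0 ≤ t → ∀ c, HasDerivAt (fun τ => G τ c)
      (s * η t * (a * w t c - b * ∑ c', w t c' - a * G t c)) t)
    (hw : ∀ t, 0 ≤ t → ∀ c, HasDerivAt (fun τ => w τ c)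
      (η t * (a * G t c - b * ∑ c', G t c' - a * w t c)) t) (c : Fin C) :
    Tendsto (fun t => G t c) atTop (nhds
      (((G 0 c - (∑ c', G 0 c') / C) + s * (w 0 c - (∑ c', w 0 c') / C)) / (1 + s))) ∧
    Tendsto (fun t => w t c) atTop (nhds
      (((G 0 c - (∑ c', G 0 c') / C) + s * (w 0 c - (∑ c', w 0 c') / C)) / (1 + s))) := by
  have ha : 0 < a := (abs_nonneg _).trans_lt hab
  have hC0 : (C : ℝ) ≠ 0 := by positivity
  have hs1 : 1 + s ≠ 0 := by positivity
  have hGs : ∀ t, 0 ≤ t → HasDerivAt (fun τ => ∑ c', G τ c')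
      (s * η t * ((a - C * b) * (∑ c', w t c') - a * ∑ c', G t c')) t := by
    intro t ht
    refine (HasDerivAt.fun_sum fun c' (_ : c' ∈ Finset.univ) => hG t ht c').congr_deriv ?_
    rw [← Finset.mul_sum, Finset.sum_sub_distrib, Finset.sum_sub_distrib, ← Finset.mul_sum,
      ← Finset.mul_sum, Finset.sum_const, Finset.card_univ, Fintype.card_fin, nsmul_eq_mul,
      ← Finset.mul_sum]
    ring
  have hws : ∀ t, 0 ≤ t → HasDerivAt (fun τ => ∑ c', w τ c')
      (η t * ((a - C * b) * (∑ c', G t c') - a * ∑ c', w t c')) t := by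
    intro t ht
    refine (HasDerivAt.fun_sum fun c' (_ : c' ∈ Finset.univ) => hw t ht c').congr_deriv ?_
    rw [← Finset.mul_sum, Finset.sum_sub_distrib, Finset.sum_sub_distrib, ← Finset.mul_sum,
      ← Finset.mul_sum, Finset.sum_const, Finset.card_univ, Fintype.card_fin, nsmul_eq_mul,
      ← Finset.mul_sum]
    ring
  obtain ⟨hx, hy⟩ := pair_tendsto_zero hη hpos hζ hs hab hGs hws
  have hd : Tendsto (fun t => (G t c - w t c) - ((∑ c', G t c') - ∑ c', w t c') / C)
      atTop (nhds 0) := by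
    refine linear_tendsto_zero (κ := (1 + s) * a) hη hζ (by positivity) fun t ht => ?_
    refine (((hG t ht c).sub (hw t ht c)).sub
      (((hGs t ht).sub (hws t ht)).div_const (C : ℝ))).congr_deriv ?_
    field_simp
    ring
  set q : ℝ → ℝ := fun t =>
    (G t c + s * w t c) - ((∑ c', G t c') + s * ∑ c', w t c') / C with hq
  have hqd : ∀ t, 0 ≤ t → HasDerivAt q 0 t := by
    intro t ht
    refine (((hG t ht c).add ((hw t ht c).const_mul s)).sub
      (((hGs t ht).add ((hws t ht).const_mul s)).div_const (C : ℝ))).congr_deriv ?_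
    field_simp
    ring
  have hqc : ∀ t, 0 ≤ t → q t = q 0 := by
    intro t ht
    refine constant_of_has_deriv_right_zero (a := 0) (b := t)
      (fun u hu => (hqd u hu.1).continuousAt.continuousWithinAt)
      (fun u hu => (hqd u hu.1).hasDerivWithinAt) t ⟨ht, le_rfl⟩
  have hlim : ((G 0 c - (∑ c', G 0 c') / C) + s * (w 0 c - (∑ c', w 0 c') / C)) / (1 + s)
      = q 0 / (1 + s) := by
    simp only [hq]; ring
  rw [hlim]
  constructor
  · have h1 := ((hd.const_mul (s / (1 + s))).add (hx.div_const (C : ℝ))).const_add (q 0 / (1 + s))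
    simp only [mul_zero, zero_div, add_zero] at h1
    refine h1.congr' ?_
    filter_upwards [eventually_ge_atTop 0] with t ht
    rw [← hqc t ht]
    simp only [hq]
    field_simp
    ring
  · have h1 := ((hd.const_mul (-1 / (1 + s))).add (hy.div_const (C : ℝ))).const_add (q 0 / (1 + s))
    simp only [mul_zero, zero_div, add_zero] at h1
    refine h1.congr' ?_
    filter_upwards [eventually_ge_atTop 0] with t ht
    rw [← hqc t ht]
    simp only [hq]
    field_simp
    ring

lemma frob_tendsto_zero {m n : Type*} [Fintype m] [Fintype n] {A : ℝ → Matrix m n ℝ}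
    {L : Matrix m n ℝ} (h : ∀ i j, Tendsto (fun t => A t i j) atTop (nhds (L i j))) :
    Tendsto (fun t => frob (A t - L)) atTop (nhds 0) := by
  have h1 : Tendsto (fun t => ∑ i, ∑ j, ((A t - L) i j) ^ 2) atTop (nhds 0) := by
    have h2 : Tendsto (fun t => ∑ i, ∑ j, ((A t - L) i j) ^ 2) atTop
        (nhds (∑ _i : m, ∑ _j : n, (0 : ℝ))) := by
      refine tendsto_finsetSum _ fun i _ => tendsto_finsetSum _ fun j _ => ?_
      simpa using ((h i j).sub_const (L i j)).pow 2
    simpa using h2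
  simpa [frob, Function.comp_def] using (Real.continuous_sqrt.tendsto 0).comp h1

lemma mul_Mmat_apply {C N p : ℕ} (γ : ℝ) (W : Matrix (Fin p) (Fin C) ℝ) (i : Fin p)
    (j : Fin C × Fin N) :
    (W * Mmat C N γ) i j = ((1 + γ) * W i j.1 - γ * ∑ c, W i c) / ((C : ℝ) * N) := by
  simp only [Matrix.mul_apply, Mmat, Matrix.of_apply]
  have : ∀ c, W i c * (((1 + γ) * (if c = j.1 then 1 else 0) - γ) / ((C : ℝ) * N))
      = ((1 + γ) * (if c = j.1 then W i c else 0) - γ * W i c) / ((C : ℝ) * N) := by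
    intro c; split_ifs <;> ring
  simp only [this]
  rw [← Finset.sum_div, Finset.sum_sub_distrib, ← Finset.mul_sum, ← Finset.mul_sum,
    Finset.sum_ite_eq' Finset.univ j.1]
  simp

lemma mul_Mmat_transpose_apply {C N p : ℕ} (γ : ℝ) (H : Matrix (Fin p) (Fin C × Fin N) ℝ)
    (i : Fin p) (c : Fin C) :
    (H * (Mmat C N γ)ᵀ) i c
      = ((1 + γ) * (∑ n, H i (c, n)) - γ * ∑ c', ∑ n, H i (c', n)) / ((C : ℝ) * N) := by
  simp only [Matrix.mul_apply, Matrix.transpose_apply, Mmat, Matrix.of_apply, Fintype.sum_prod_type]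
  have : ∀ c' n, H i (c', n) * (((1 + γ) * (if c = c' then 1 else 0) - γ) / ((C : ℝ) * N))
      = ((1 + γ) * (if c = c' then H i (c', n) else 0) - γ * H i (c', n)) / ((C : ℝ) * N) := by
    intro c' n; split_ifs <;> ring
  simp only [this, ← Finset.sum_div, Finset.sum_sub_distrib, ← Finset.mul_sum]
  rw [Finset.sum_comm]
  simp

lemma mul_Kmat_apply {C N p : ℕ} (H : Matrix (Fin p) (Fin C × Fin N) ℝ) (i : Fin p) (c : Fin C) :
    (H * Kmat C N) i c = ∑ n, H i (c, n) := by
  simp only [Matrix.mul_apply, Kmat, Matrix.of_apply, Fintype.sum_prod_type]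
  rw [Finset.sum_comm]
  simp

lemma Pproj_apply {C N p : ℕ} (ε : ℝ) (H : Matrix (Fin p) (Fin C × Fin N) ℝ)
    (W : Matrix (Fin p) (Fin C) ℝ) (i : Fin p) (c : Fin C) :
    Pproj C N ε H W i c =
      (ε * ((∑ n, H i (c, n)) / √N - (∑ c', (∑ n, H i (c', n)) / √N) / C)
        + (W i c - (∑ c', W i c') / C)) / 2 := by
  rw [Pproj, Matrix.mul_sub, Matrix.mul_one, Matrix.mul_smul, Matrix.sub_apply]
  simp only [Matrix.smul_apply, smul_eq_mul]
  rw [Matrix.mul_apply]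
  simp only [Matrix.smul_apply, Matrix.add_apply, mul_Kmat_apply, smul_eq_mul, Matrix.of_apply,
    mul_one]
  rw [← Finset.mul_sum, Finset.sum_add_distrib, ← Finset.mul_sum, ← Finset.sum_div]
  ring

/-- **Convergence at the critical weight decay `λ = (1+γ)/(C√N)`.**
The features converge to `H1⁺ + ((1−s)/(1+s))·H1⁻` and the prototypes to
`W1⁺ − ((1−s)/(1+s))·W1⁻` in Frobenius norm. -/
theorem regularized_critical_decay_limit
    (C N p : ℕ) (hC : 1 ≤ C) (hN : 1 ≤ N) (hp : 1 ≤ p) (γ : ℝ)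
    (hγ : (C = 2 ∧ 0 < γ) ∨ (2 < C ∧ 0 < γ ∧ γ < 2 / ((C : ℝ) - 2)))
    (lam s : ℝ) (hs : 0 < s)
    (hlam : lam = (1 + γ) / ((C : ℝ) * Real.sqrt N))
    (η2 : ℝ → ℝ) (hη2 : Continuous η2) (hη2pos : ∀ t, 0 < η2 t)
    (hζ : Tendsto (fun t : ℝ => ∫ τ in (0:ℝ)..t, s * η2 τ) atTop atTop)
    (H : ℝ → Matrix (Fin p) (Fin C × Fin N) ℝ)
    (W : ℝ → Matrix (Fin p) (Fin C) ℝ)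
    (hH : ∀ t, 0 ≤ t → ∀ i j,
      HasDerivAt (fun τ => H τ i j)
        ((s * η2 t) * (W t * Mmat C N γ) i j - lam * (s * η2 t) * H t i j) t)
    (hW : ∀ t, 0 ≤ t → ∀ i c,
      HasDerivAt (fun τ => W τ i c)
        (η2 t * (H t * (Mmat C N γ)ᵀ) i c - lam * η2 t * W t i c) t) :
    Tendsto
      (fun t => frob (H t -
        (H1comp C N 1 (H 0) (W 0) + ((1 - s) / (1 + s)) • H1comp C N (-1) (H 0) (W 0))))
      atTop (nhds 0) ∧
    Tendsto
      (fun t => frob (W t -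
        (Pproj C N 1 (H 0) (W 0) - ((1 - s) / (1 + s)) • Pproj C N (-1) (H 0) (W 0))))
      atTop (nhds 0) := by
  have hC0 : (0 : ℝ) < C := by exact_mod_cast hC
  have hN0 : (0 : ℝ) < N := by exact_mod_cast hN
  have hγ0 : 0 < γ := by rcases hγ with h | h <;> tauto
  obtain ⟨r, hr⟩ : ∃ r, r = √(N : ℝ) := ⟨_, rfl⟩
  have hr0 : 0 < r := hr ▸ Real.sqrt_pos.2 hN0
  have hrN : (N : ℝ) = r ^ 2 := by rw [hr, Real.sq_sqrt hN0.le]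
  rw [← hr] at hlam
  have hlam0 : 0 < lam := by rw [hlam]; positivity
  obtain ⟨b, hb⟩ : ∃ b, b = γ / ((C : ℝ) * r) := ⟨_, rfl⟩
  have hCb : C * b = γ / r := by rw [hb]; field_simp
  have hCb0 : 0 < C * b := by rw [hCb]; positivity
  have hγ2 : γ * ((C : ℝ) - 2) < 2 := by
    rcases hγ with ⟨h, _⟩ | ⟨h, _, h3⟩
    · rw [h]; norm_num
    · have : (0 : ℝ) < (C : ℝ) - 2 := by
        have : (2 : ℝ) < C := by exact_mod_cast h
        linarith
      exact (lt_div_iff₀ this).1 h3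
  have hab : |lam - C * b| < lam := by
    have h1 : C * b < 2 * lam := by
      rw [hCb, hlam, show 2 * ((1 + γ) / (C * r)) = (2 * (1 + γ) / C) / r by field_simp]
      apply div_lt_div_of_pos_right _ hr0
      rw [lt_div_iff₀ hC0]
      linarith
    rw [abs_lt]
    constructor <;> linarith
  have hζ' : Tendsto (fun t : ℝ => ∫ τ in (0:ℝ)..t, η2 τ) atTop atTop := by
    have h1 := hζ.const_mul_atTop (inv_pos.2 hs)
    refine h1.congr fun t => ?_
    rw [intervalIntegral.integral_const_mul]
    field_simp
  have hH' : ∀ i t, 0 ≤ t → ∀ c n, HasDerivAt (fun τ => H τ i (c, n))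
      (s * η2 t * (lam / r * W t i c - b / r * (∑ c', W t i c') - lam * H t i (c, n))) t := by
    intro i t ht c n
    refine (hH t ht i (c, n)).congr_deriv ?_
    rw [mul_Mmat_apply, hrN, hb, hlam]
    field_simp
  have hG : ∀ i t, 0 ≤ t → ∀ c, HasDerivAt (fun τ => (∑ n, H τ i (c, n)) / r)
      (s * η2 t * (lam * W t i c - b * (∑ c', W t i c') - lam * ((∑ n, H t i (c, n)) / r))) t := by
    intro i t ht c
    refine ((HasDerivAt.fun_sum fun n (_ : n ∈ Finset.univ) => hH' i t ht c n).div_const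
      r).congr_deriv ?_
    rw [← Finset.mul_sum, Finset.sum_sub_distrib, ← Finset.mul_sum, Finset.sum_const,
      Finset.card_univ, Fintype.card_fin, nsmul_eq_mul, hrN]
    field_simp
  have hW' : ∀ i t, 0 ≤ t → ∀ c, HasDerivAt (fun τ => W τ i c)
      (η2 t * (lam * ((∑ n, H t i (c, n)) / r) - b * (∑ c', (∑ n, H t i (c', n)) / r)
        - lam * W t i c)) t := by
    intro i t ht c
    refine (hW t ht i c).congr_deriv ?_
    rw [mul_Mmat_transpose_apply, ← Finset.sum_div, hrN, hb, hlam]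
    field_simp
  have key := fun i c => class_system_tendsto hC (G := fun t c => (∑ n, H t i (c, n)) / r)
    (w := fun t c => W t i c) hη2 hη2pos hζ' hs hab (hG i) (hW' i) c
  have hs1 : 1 + s ≠ 0 := by positivity
  constructor
  · refine frob_tendsto_zero fun i j => ?_
    obtain ⟨c, n⟩ := j
    -- the deviation of a feature from its class mean decays on its own
    have hres : Tendsto (fun t => H t i (c, n) - (∑ n, H t i (c, n)) / r / r) atTop (nhds 0) := by
      refine linear_tendsto_zero (κ := s * lam) hη2 hζ' (by positivity) fun t ht => ?_
      refine ((hH' i t ht c n).sub ((hG i t ht c).div_const r)).congr_deriv ?_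
      field_simp
      ring
    have h1 := hres.add ((key i c).1.div_const r)
    simp only [sub_add_cancel] at h1
    convert h1 using 2
    simp only [H1comp, colRep, Matrix.add_apply, Matrix.smul_apply, Matrix.of_apply, smul_eq_mul,
      Pproj_apply, ← hr]
    field_simp
    ring
  · refine frob_tendsto_zero fun i c => ?_
    convert (key i c).2 using 2
    simp only [Matrix.sub_apply, Matrix.smul_apply, smul_eq_mul, Pproj_apply, ← hr]
    field_simp
    ring
end
end

section
/- Let p ≥ 1 be an integer, let w ∈ ℝ^p with w ≠ 0, let ε > 0, and let η : ℕ → ℝ satisfy η(t) ≥ ε for all t and lim_{t→∞} η(t+1)/η(t) = 1. Let h : ℕ → ℝ^p satisfy h(0) ≠ 0, ⟨w, h(0)⟩/(‖w‖₂·‖h(0)‖₂) > −1, and the recursion h(t+1) = h(t) + (η(t)/‖h(t)‖₂)·( w − (⟨h(t), w⟩/‖h(t)‖₂²)·h(t) ) for every t ∈ ℕ. Assume moreover that the sequence t ↦ η(t)/‖h(t)‖₂ is non-increasing and that η(0)·‖w‖₂ < ‖h(0)‖₂². Then h(t) ≠ 0 for every t, and lim_{t→∞} ‖ h(t)/‖h(t)‖₂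 − w/‖w‖₂ ‖₂ = 0. -/
open scoped BigOperators
open RealInnerProductSpace Filter

/-!
Write `c` for the cosine of the angle between `w` and `h` and `a = η‖w‖/‖h‖²`. The update direction
is orthogonal to `h`, so `‖h'‖² = ‖h‖²(1 + a²(1 - c²))` and `c' = (c + a(1 - c²))/√(1 + a²(1 - c²))`
(`step_norm_sq`, `step_cos`). Hence norms never decrease, and monotonicity of `η/‖h‖` together with
`η(0)‖w‖ < ‖h(0)‖²` keeps `a < 1` forever. In this regime `c' - c ≥ a(1 - c²)/4` (`cos_gain`).

The norm identity also gives `‖h(t)‖² = O(t)`, since `η/‖h‖` is bounded, so `a(t)` is at least a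
multiple of `1/(t+1)`, which has divergent sum. If `c` stayed below `1 - δ`, then
`1 - c² ≥ δ(1 + c(0)) > 0` throughout and the gains would add up to infinity, contradicting `c ≤ 1`.
So `c → 1`, which is the claim because the squared distance of the unit vectors is `2 - 2c`.
-/

/-- Below unit relative step size `a`, one step increases the cosine `c` by at least
`a(1 - c²)/4`. -/
lemma cos_gain {a c : ℝ} (ha : 0 < a) (ha1 : a < 1) (hc : -1 ≤ c) (hc1 : c ≤ 1) :
    c + a * (1 - c ^ 2) / 4 ≤ (c + a * (1 - c ^ 2)) / √(1 + a ^ 2 * (1 - c ^ 2)) := by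
  have hS : 0 ≤ 1 - c ^ 2 := by nlinarith
  have hS1 : 1 - c ^ 2 ≤ 1 := by nlinarith
  generalize 1 - c ^ 2 = S at *
  have haS : 0 ≤ a * S := by positivity
  have haS1 : a * S ≤ 1 := by nlinarith
  have hx : 0 ≤ a ^ 2 * S := by positivity
  have hq1 : 1 ≤ √(1 + a ^ 2 * S) := by
    rw [Real.one_le_sqrt]; linarith
  have hq : √(1 + a ^ 2 * S) ≤ 1 + a ^ 2 * S / 2 := by
    rw [Real.sqrt_le_left (by positivity)]
    nlinarith [sq_nonneg (a ^ 2 * S)]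
  rw [le_div_iff₀ (by linarith)]
  rcases le_total (c + a * S / 4) 0 with hn | hn
  · nlinarith
  · have h1 : (c + a * S / 4) * √(1 + a ^ 2 * S) ≤ (c + a * S / 4) * (1 + a ^ 2 * S / 2) := by
      gcongr
    have h2 : (c + a * S / 4) * a ≤ 5 / 4 := by nlinarith
    have h3 : (a * S) * ((c + a * S / 4) * a) ≤ (a * S) * (5 / 4) := by gcongr
    nlinarith

section Step

variable {E : Type*} [NormedAddCommGroup E] [InnerProductSpace ℝ E]

lemma step_norm_sq {w x : E} (hw : w ≠ 0) (hx : x ≠ 0) (b : ℝ) :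
    ‖x + b • (w - (⟪x, w⟫ / ‖x‖ ^ 2) • x)‖ ^ 2
      = ‖x‖ ^ 2 + b ^ 2 * ‖w‖ ^ 2 * (1 - (⟪w, x⟫ / (‖w‖ * ‖x‖)) ^ 2) := by
  have hw' : ‖w‖ ≠ 0 := norm_ne_zero_iff.2 hw
  have hx' : ‖x‖ ≠ 0 := norm_ne_zero_iff.2 hx
  rw [← real_inner_self_eq_norm_sq (x + _)]
  simp only [inner_add_left, inner_add_right, inner_sub_left, inner_sub_right,
    real_inner_smul_left, real_inner_smul_right, real_inner_self_eq_norm_sq w,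
    real_inner_self_eq_norm_sq x, real_inner_comm w x]
  field_simp
  ring

lemma step_inner {w x : E} (hw : w ≠ 0) (hx : x ≠ 0) (b : ℝ) :
    ⟪w, x + b • (w - (⟪x, w⟫ / ‖x‖ ^ 2) • x)⟫
      = ⟪w, x⟫ + b * ‖w‖ ^ 2 * (1 - (⟪w, x⟫ / (‖w‖ * ‖x‖)) ^ 2) := by
  have hw' : ‖w‖ ≠ 0 := norm_ne_zero_iff.2 hw
  have hx' : ‖x‖ ≠ 0 := norm_ne_zero_iff.2 hx
  simp only [inner_add_right, inner_sub_right,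
    real_inner_smul_right, real_inner_self_eq_norm_sq, real_inner_comm w x]
  field_simp

lemma step_cos {w x : E} (hw : w ≠ 0) (hx : x ≠ 0) (b : ℝ) :
    ⟪w, x + b • (w - (⟪x, w⟫ / ‖x‖ ^ 2) • x)⟫
        / (‖w‖ * ‖x + b • (w - (⟪x, w⟫ / ‖x‖ ^ 2) • x)‖)
      = (⟪w, x⟫ / (‖w‖ * ‖x‖) + b * ‖w‖ / ‖x‖ * (1 - (⟪w, x⟫ / (‖w‖ * ‖x‖)) ^ 2))
        / √(1 + (b * ‖w‖ / ‖x‖) ^ 2 * (1 - (⟪w, x⟫ / (‖w‖ * ‖x‖)) ^ 2)) := by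
  have hw' : 0 < ‖w‖ := norm_pos_iff.2 hw
  have hx' : 0 < ‖x‖ := norm_pos_iff.2 hx
  have hn : ‖x + b • (w - (⟪x, w⟫ / ‖x‖ ^ 2) • x)‖
      = ‖x‖ * √(1 + (b * ‖w‖ / ‖x‖) ^ 2 * (1 - (⟪w, x⟫ / (‖w‖ * ‖x‖)) ^ 2)) := by
    rw [← Real.sqrt_sq (norm_nonneg (x + _)), step_norm_sq hw hx]
    nth_rewrite 3 [← Real.sqrt_sq hx'.le]
    rw [← Real.sqrt_mul (sq_nonneg _)]
    congr 1
    generalize ⟪w, x⟫ / (‖w‖ * ‖x‖) = c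
    field_simp
  rw [hn, step_inner hw hx, ← mul_assoc, ← div_div]
  congr 1
  rw [add_div]
  congr 1
  generalize ⟪w, x⟫ / (‖w‖ * ‖x‖) = c
  field_simp

lemma norm_sub_normalized_sq {w x : E} (hw : w ≠ 0) (hx : x ≠ 0) :
    ‖(‖x‖⁻¹ • x) - (‖w‖⁻¹ • w)‖ ^ 2 = 2 - 2 * (⟪w, x⟫ / (‖w‖ * ‖x‖)) := by
  have hw' : ‖w‖ ≠ 0 := norm_ne_zero_iff.2 hw
  have hx' : ‖x‖ ≠ 0 := norm_ne_zero_iff.2 hx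
  rw [norm_sub_sq_real, norm_smul, norm_smul, real_inner_smul_left, real_inner_smul_right,
    real_inner_comm w x]
  simp only [norm_inv, norm_norm]
  field_simp
  ring

end Step

/-- **Convergence of projected gradient ascent of the normalized alignment.**
Under the recursion `h(t+1) = h(t) + (η(t)/‖h(t)‖)·(w − (⟪h(t),w⟫/‖h(t)‖²)·h(t))`,
with a bounded-below learning rate whose consecutive ratios tend to `1`,
`η(t)/‖h(t)‖` non-increasing and `η(0)·‖w‖ < ‖h(0)‖²`, starting from a point whose
cosine similarity with `w` exceeds `−1`, the iterates never vanish and their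
normalizations converge to `w/‖w‖`. -/
theorem spherical_single_vector_convergence
    (p : ℕ) (hp : 1 ≤ p)
    (w : EuclideanSpace ℝ (Fin p)) (hw : w ≠ 0)
    (ε : ℝ) (hε : 0 < ε)
    (η : ℕ → ℝ) (hη : ∀ t, ε ≤ η t)
    (hηratio : Tendsto (fun t => η (t + 1) / η t) atTop (nhds 1))
    (h : ℕ → EuclideanSpace ℝ (Fin p))
    (h0 : h 0 ≠ 0)
    (hcos : ⟪w, h 0⟫ / (‖w‖ * ‖h 0‖) > -1)
    (hrec : ∀ t : ℕ,
      h (t + 1) = h t + (η t / ‖h t‖) • (w - (⟪h t, w⟫ / ‖h t‖ ^ 2) • h t))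
    (hmono : Antitone fun t => η t / ‖h t‖)
    (hinit : η 0 * ‖w‖ < ‖h 0‖ ^ 2) :
    (∀ t, h t ≠ 0) ∧
    Tendsto (fun t => ‖(‖h t‖⁻¹ • h t) - (‖w‖⁻¹ • w)‖) atTop (nhds 0) := by
  have hW : 0 < ‖w‖ := norm_pos_iff.2 hw
  have hr0 : 0 < ‖h 0‖ := norm_pos_iff.2 h0
  have hηpos : ∀ t, 0 < η t := fun t => hε.trans_le (hη t)
  set c : ℕ → ℝ := fun t => ⟪w, h t⟫ / (‖w‖ * ‖h t‖) with hc_def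
  have hcabs : ∀ t, |c t| ≤ 1 := fun t => abs_real_inner_div_norm_mul_norm_le_one w (h t)
  have hc1 : ∀ t, c t ≤ 1 := fun t => (abs_le.1 (hcabs t)).2
  have hcm1 : ∀ t, -1 ≤ c t := fun t => (abs_le.1 (hcabs t)).1
  have hS0 : ∀ t, 0 ≤ 1 - c t ^ 2 := fun t => by nlinarith [hc1 t, hcm1 t]
  have hnsq : ∀ t, h t ≠ 0 →
      ‖h (t + 1)‖ ^ 2 = ‖h t‖ ^ 2 + (η t / ‖h t‖) ^ 2 * ‖w‖ ^ 2 * (1 - c t ^ 2) := by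
    intro t ht
    rw [hrec t, step_norm_sq hw ht]
  have hnorm : ∀ t, ‖h 0‖ ≤ ‖h t‖ := by
    intro t
    induction t with
    | zero => exact le_rfl
    | succ t ih =>
      have ht : h t ≠ 0 := norm_pos_iff.1 (hr0.trans_le ih)
      have h1 : 0 ≤ (η t / ‖h t‖) ^ 2 * ‖w‖ ^ 2 * (1 - c t ^ 2) :=
        mul_nonneg (by positivity) (hS0 t)
      refine ih.trans (le_of_sq_le_sq ?_ (norm_nonneg _))
      rw [hnsq t ht]
      linarith
  have hpos : ∀ t, 0 < ‖h t‖ := fun t => hr0.trans_le (hnorm t)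
  have hne : ∀ t, h t ≠ 0 := fun t => norm_pos_iff.1 (hpos t)
  refine ⟨hne, ?_⟩
  have hβ : ∀ t, η t / ‖h t‖ ≤ η 0 / ‖h 0‖ := fun t => hmono (Nat.zero_le t)
  have hβpos : ∀ t, 0 < η t / ‖h t‖ := fun t => div_pos (hηpos t) (hpos t)
  set a : ℕ → ℝ := fun t => η t / ‖h t‖ * ‖w‖ / ‖h t‖ with ha_def
  have hapos : ∀ t, 0 < a t := fun t => div_pos (mul_pos (hβpos t) hW) (hpos t)
  have ha1 : ∀ t, a t < 1 := by
    intro t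
    rw [ha_def]
    dsimp only
    rw [div_lt_one (hpos t)]
    calc η t / ‖h t‖ * ‖w‖ ≤ η 0 / ‖h 0‖ * ‖w‖ := mul_le_mul_of_nonneg_right (hβ t) hW.le
      _ < ‖h 0‖ := by
        rw [div_mul_eq_mul_div, div_lt_iff₀ hr0]
        linarith [sq (‖h 0‖)]
      _ ≤ ‖h t‖ := hnorm t
  have hgain : ∀ t, c t + a t * (1 - c t ^ 2) / 4 ≤ c (t + 1) := by
    intro t
    have h1 := cos_gain (hapos t) (ha1 t) (hcm1 t) (hc1 t)
    have h2 := step_cos hw (hne t) (η t / ‖h t‖)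
    rw [← hrec t] at h2
    exact h1.trans h2.ge
  have hcmono : Monotone c := monotone_nat_of_le_succ fun t => by
    have := mul_nonneg (hapos t).le (hS0 t)
    linarith [hgain t]
  set C : ℝ := (η 0 / ‖h 0‖) ^ 2 * ‖w‖ ^ 2 with hC
  have hC0 : 0 ≤ C := by positivity
  have hgrow : ∀ t : ℕ, ‖h t‖ ^ 2 ≤ ‖h 0‖ ^ 2 + t * C := by
    intro t
    induction t with
    | zero => simp
    | succ t ih =>
      have h1 : (η t / ‖h t‖) ^ 2 * ‖w‖ ^ 2 * (1 - c t ^ 2) ≤ C * 1 := by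
        have h2 : (η t / ‖h t‖) ^ 2 * ‖w‖ ^ 2 ≤ C := by
          have := hβ t
          have := (hβpos t).le
          rw [hC]
          gcongr
        exact mul_le_mul h2 (by nlinarith [sq_nonneg (c t)]) (hS0 t) hC0
      rw [hnsq t (hne t)]
      push_cast
      linarith
  set m : ℝ := ε * ‖w‖ / (‖h 0‖ ^ 2 + C) with hm
  have hmpos : 0 < m := by positivity
  have halow : ∀ t : ℕ, m * (1 / ((t : ℝ) + 1)) ≤ a t := by
    intro t
    have h1 : a t = η t * ‖w‖ / ‖h t‖ ^ 2 := by
      have := (hpos t).ne'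
      simp only [ha_def]
      field_simp
    rw [h1, hm, div_mul_div_comm, mul_one]
    have h2 : ‖h t‖ ^ 2 ≤ (‖h 0‖ ^ 2 + C) * ((t : ℝ) + 1) := by
      have : 0 ≤ (t : ℝ) * ‖h 0‖ ^ 2 := by positivity
      nlinarith [hgrow t]
    have := hpos t
    have := hη t
    have := (hηpos t).le
    gcongr
  have hclose : ∀ δ > 0, ∃ T, 1 - δ < c T := by
    intro δ hδ
    by_contra! hcon
    have hc0 : 0 < 1 + c 0 := by have : c 0 > -1 := hcos; linarith
    set k : ℝ := m * (δ * (1 + c 0)) / 4 with hk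
    have hkpos : 0 < k := by positivity
    have hsum : ∀ n : ℕ, c 0 + k * ∑ i ∈ Finset.range n, 1 / ((i : ℝ) + 1) ≤ c n := by
      intro n
      induction n with
      | zero => simp
      | succ n ih =>
        have h1 : δ * (1 + c 0) ≤ 1 - c n ^ 2 := by
          have h3 : δ * (1 + c 0) ≤ (1 - c n) * (1 + c n) :=
            mul_le_mul (by linarith [hcon n]) (by linarith [hcmono (Nat.zero_le n)]) hc0.le
              (by linarith [hc1 n])
          linarith
        have h2 : m * (1 / ((n : ℝ) + 1)) * (δ * (1 + c 0)) ≤ a n * (1 - c n ^ 2) :=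
          mul_le_mul (halow n) h1 (by positivity) (hapos n).le
        rw [Finset.sum_range_succ, mul_add, hk] at *
        linarith [hgain n]
    obtain ⟨n, hn⟩ := (Real.tendsto_sum_range_one_div_nat_succ_atTop.eventually_gt_atTop
      ((1 - c 0) / k)).exists
    rw [div_lt_iff₀ hkpos] at hn
    linarith [hsum n, hc1 n]
  have hclim : Tendsto c atTop (nhds 1) := by
    refine tendsto_order.2 ⟨fun b hb => ?_, fun b hb => ?_⟩
    · obtain ⟨T, hT⟩ := hclose (1 - b) (by linarith)
      filter_upwards [eventually_ge_atTop T] with t ht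
      linarith [hcmono ht]
    · exact Eventually.of_forall fun t => (hc1 t).trans_lt hb
  have hsq : Tendsto (fun t => √(2 - 2 * c t)) atTop (nhds 0) := by
    have := ((hclim.const_mul 2).const_sub 2).sqrt
    simpa using this
  refine hsq.congr fun t => ?_
  rw [← norm_sub_normalized_sq hw (hne t), Real.sqrt_sq (norm_nonneg _)]
end

section
/- Let C, N, p ≥ 1 be integers, γ > 0, and ε0 > 0. Let w_1,…,w_C ∈ ℝ^p be nonzero vectors, and let η : ℕ → ℝ satisfy η(t) ≥ ε0 for all t and lim_{t→∞} η(t+1)/η(t) = 1. For each i ∈ [N] and c ∈ [C], let h_{i,c} : ℕ → ℝ^p satisfy h_{i,c}(0) ≠ 0, ⟨w_c, h_{i,c}(0)⟩/(‖w_c‖₂·‖h_{i,c}(0)‖₂) > −1, and the recursion h_{i,c}(t+1) = h_{i,c}(t) + ((1+γ)·η(t)/(C·N·‖h_{i,c}(t)‖₂))·( w_c − (⟨h_{i,c}(t), w_c⟩/‖h_{i,c}(t)‖₂²)·h_{i,c}(t) ) for every t ∈ ℕ. Assume that for each (i,c) the sequence t ↦ η(t)/‖h_{i,c}(t)‖₂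 is non-increasing and that (1+γ)·η(0)·‖w_c‖₂/(C·N) ≤ ‖h_{i,c}(0)‖₂². Then for every i ∈ [N] and c ∈ [C], h_{i,c}(t) ≠ 0 for all t and lim_{t→∞} ‖ h_{i,c}(t)/‖h_{i,c}(t)‖₂ − w_c/‖w_c‖₂ ‖₂ = 0; equivalently, the matrix of ℓ₂-normalized feature columns converges to the matrix whose (c,i)-th column is the normalized prototype w_c/‖w_c‖₂. -/
open scoped BigOperators
open RealInnerProductSpace Filter

/-!
Fix a feature `h` with prototype `w`, and let `x` be the cosine of the angle between them.
The gradient step is orthogonal to `h`, so `‖h‖` never decreases (in particular `h ≠ 0`), and with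
`a = k η ‖w‖ / ‖h‖ ^ 2` (where `k = (1 + γ) / (C N)`) the cosine evolves by
`x' = (x + a (1 - x ^ 2)) / √(1 + a ^ 2 (1 - x ^ 2))`.
Since `η / ‖h‖` is non-increasing and `‖h‖` is non-decreasing, `a` is non-increasing, hence `a ≤ 1`
by the initial condition, and an elementary estimate (`cos_step`) gives
`x' ≥ x + a (1 - x ^ 2) / 3`. So `x` increases to a limit `L ≤ 1`. If `L < 1`, then `1 - x ^ 2` is
bounded below by a positive constant (as `x 0 > -1`), so `∑ a` would be finite. But
`‖h (t + 1)‖ ^ 2 - ‖h t‖ ^ 2 ≤ (k ‖w‖ η t / ‖h t‖) ^ 2` is bounded, so `‖h t‖ ^ 2` grows at most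
linearly, and with `η ≥ ε0` the series `∑ a` dominates a multiple of the harmonic series.
-/

/-- The increase of the cosine in one step. For `x + a (1 - x ^ 2) / 3 ≥ 0` it follows from
`D ≤ 1 + a ^ 2 (1 - x ^ 2) / 2`, otherwise from `D ≥ 1`. -/
lemma cos_step {a x D : ℝ} (ha0 : 0 ≤ a) (ha1 : a ≤ 1) (hx0 : -1 ≤ x) (hx1 : x ≤ 1)
    (hD : 0 < D) (hD2 : D ^ 2 = 1 + a ^ 2 * (1 - x ^ 2)) :
    x + a * (1 - x ^ 2) / 3 ≤ (x + a * (1 - x ^ 2)) / D := by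
  have hs : 0 ≤ 1 - x ^ 2 := by nlinarith
  have hs1 : 1 - x ^ 2 ≤ 1 := by nlinarith
  have has : 0 ≤ a * (1 - x ^ 2) := mul_nonneg ha0 hs
  have has2 : 0 ≤ a ^ 2 * (1 - x ^ 2) := by positivity
  have hD1 : 1 ≤ D := by nlinarith
  have hDu : D ≤ 1 + a ^ 2 * (1 - x ^ 2) / 2 := by nlinarith [sq_nonneg (D - 1)]
  rw [le_div_iff₀ hD]
  by_cases hy : 0 ≤ x + a * (1 - x ^ 2) / 3
  · have h1 := mul_le_mul_of_nonneg_left hDu hy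
    refine h1.trans ?_
    have h2 : a ^ 2 * (1 - x ^ 2) ≤ 1 := by nlinarith
    have h3 : a * x ≤ 1 := by nlinarith
    have h4 : 0 ≤ a * (1 - x ^ 2) * (1 - a * x) := mul_nonneg has (by linarith)
    have h5 : 0 ≤ a * (1 - x ^ 2) * (1 - a ^ 2 * (1 - x ^ 2)) := mul_nonneg has (by linarith)
    nlinarith
  · push Not at hy
    nlinarith

section
variable {E : Type*} [NormedAddCommGroup E] [InnerProductSpace ℝ E]

/-- One gradient step with `β = k η`: the norm does not decrease, its square grows in a controlled
way, and the cosine with `w` increases. -/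
lemma feature_step {h h' w : E} {β : ℝ} (hh : h ≠ 0) (hw : w ≠ 0) (hβ : 0 ≤ β)
    (hβ1 : β * ‖w‖ / ‖h‖ ^ 2 ≤ 1)
    (hrec : h' = h + (β / ‖h‖) • (w - (⟪h, w⟫ / ‖h‖ ^ 2) • h)) :
    ‖h‖ ≤ ‖h'‖ ∧ ‖h'‖ ^ 2 ≤ ‖h‖ ^ 2 + (β * ‖w‖ / ‖h‖) ^ 2 ∧
    ⟪h, w⟫ / (‖h‖ * ‖w‖) +
      β * ‖w‖ / ‖h‖ ^ 2 * (1 - (⟪h, w⟫ / (‖h‖ * ‖w‖)) ^ 2) / 3 ≤ ⟪h', w⟫ / (‖h'‖ * ‖w‖) := by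
  have hr : 0 < ‖h‖ := norm_pos_iff.mpr hh
  have hW : 0 < ‖w‖ := norm_pos_iff.mpr hw
  obtain ⟨hx0, hx1⟩ := abs_le.mp (abs_real_inner_div_norm_mul_norm_le_one h w)
  set x := ⟪h, w⟫ / (‖h‖ * ‖w‖) with hx
  set a := β * ‖w‖ / ‖h‖ ^ 2 with ha
  have hin : ⟪h, w⟫ = x * (‖h‖ * ‖w‖) := by rw [hx]; field_simp
  have hs : 0 ≤ 1 - x ^ 2 := by nlinarith
  have ha0 : 0 ≤ a := by positivity
  have hnorm : ‖h'‖ ^ 2 = ‖h‖ ^ 2 * (1 + a ^ 2 * (1 - x ^ 2)) := by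
    rw [hrec, ← real_inner_self_eq_norm_sq]
    simp only [inner_add_left, inner_add_right, inner_sub_left, inner_sub_right,
      real_inner_smul_left, real_inner_smul_right, real_inner_comm h w]
    simp only [real_inner_self_eq_norm_sq]
    rw [hin, ha]
    field_simp
    ring
  have hinner : ⟪h', w⟫ = ‖h‖ * ‖w‖ * (x + a * (1 - x ^ 2)) := by
    rw [hrec]
    simp only [inner_add_left, inner_sub_left, real_inner_smul_left, real_inner_self_eq_norm_sq]
    rw [hin, ha]
    field_simp
  have hle : ‖h‖ ≤ ‖h'‖ := by
    refine (sq_le_sq₀ hr.le (norm_nonneg _)).mp ?_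
    rw [hnorm]
    have : 0 ≤ ‖h‖ ^ 2 * (a ^ 2 * (1 - x ^ 2)) := by positivity
    linarith
  refine ⟨hle, ?_, ?_⟩
  · have e : (β * ‖w‖ / ‖h‖) ^ 2 = ‖h‖ ^ 2 * a ^ 2 := by rw [ha]; field_simp
    rw [hnorm, e]
    have : 0 ≤ ‖h‖ ^ 2 * a ^ 2 * x ^ 2 := by positivity
    nlinarith
  · have hr' : 0 < ‖h'‖ := hr.trans_le hle
    have hD2 : (‖h'‖ / ‖h‖) ^ 2 = 1 + a ^ 2 * (1 - x ^ 2) := by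
      rw [div_pow, hnorm]; field_simp
    refine (cos_step ha0 hβ1 hx0 hx1 (div_pos hr' hr) hD2).trans_eq ?_
    rw [hinner]
    field_simp

/-- Convergence for a single feature, with `k = (1 + γ) / (C N)`. -/
lemma feature_tendsto {h : ℕ → E} {w : E} {k ε0 : ℝ} {η : ℕ → ℝ} (hk : 0 < k) (hw : w ≠ 0)
    (hε0 : 0 < ε0) (hη : ∀ t, ε0 ≤ η t) (h0 : h 0 ≠ 0)
    (hcos : -1 < ⟪h 0, w⟫ / (‖h 0‖ * ‖w‖))
    (hrec : ∀ t, h (t + 1) = h t + (k * η t / ‖h t‖) • (w - (⟪h t, w⟫ / ‖h t‖ ^ 2) • h t))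
    (hmono : Antitone fun t => η t / ‖h t‖)
    (hinit : k * η 0 * ‖w‖ ≤ ‖h 0‖ ^ 2) :
    (∀ t, h t ≠ 0) ∧
      Tendsto (fun t => ‖(‖h t‖⁻¹ • h t) - (‖w‖⁻¹ • w)‖) atTop (nhds 0) := by
  have hW : 0 < ‖w‖ := norm_pos_iff.mpr hw
  have hηp : ∀ t, 0 < η t := fun t => hε0.trans_le (hη t)
  -- The bound `a t ≤ 1` propagates together with `h t ≠ 0`.
  have hinv : ∀ t, h t ≠ 0 ∧ k * η t * ‖w‖ / ‖h t‖ ^ 2 ≤ 1 := by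
    intro t
    induction t with
    | zero => exact ⟨h0, (div_le_one (by positivity)).mpr hinit⟩
    | succ t ih =>
      obtain ⟨hh, ha⟩ := ih
      have hr : 0 < ‖h t‖ := norm_pos_iff.mpr hh
      have hle := (feature_step hh hw (by have := hηp t; positivity) ha (hrec t)).1
      have hr' : 0 < ‖h (t + 1)‖ := hr.trans_le hle
      refine ⟨norm_pos_iff.mp hr', le_trans ?_ ha⟩
      have hm : η (t + 1) / ‖h (t + 1)‖ ≤ η t / ‖h t‖ := hmono (Nat.le_succ t)
      have e : ∀ s, k * η s * ‖w‖ / ‖h s‖ ^ 2 = k * ‖w‖ * (η s / ‖h s‖ * (1 / ‖h s‖)) := by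
        intro s; rw [sq, div_mul_div_comm, mul_one]; ring
      rw [e, e]
      have := hηp t
      gcongr
  have hne : ∀ t, h t ≠ 0 := fun t => (hinv t).1
  refine ⟨hne, ?_⟩
  have hr : ∀ t, 0 < ‖h t‖ := fun t => norm_pos_iff.mpr (hne t)
  have hstep := fun t => feature_step (hne t) hw
    (mul_nonneg hk.le (hηp t).le) (hinv t).2 (hrec t)
  set x : ℕ → ℝ := fun t => ⟪h t, w⟫ / (‖h t‖ * ‖w‖) with hx
  set a : ℕ → ℝ := fun t => k * η t * ‖w‖ / ‖h t‖ ^ 2 with ha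
  have ha0 : ∀ t, 0 ≤ a t := fun t => by
    have := hηp t
    positivity
  have hx0 : ∀ t, -1 ≤ x t := fun t =>
    (abs_le.mp (abs_real_inner_div_norm_mul_norm_le_one (h t) w)).1
  have hx1 : ∀ t, x t ≤ 1 := fun t =>
    (abs_le.mp (abs_real_inner_div_norm_mul_norm_le_one (h t) w)).2
  have hxs : ∀ t, x t + a t * (1 - x t ^ 2) / 3 ≤ x (t + 1) := fun t => (hstep t).2.2
  have hxm : Monotone x := monotone_nat_of_le_succ fun t => by
    have : 0 ≤ a t * (1 - x t ^ 2) := mul_nonneg (ha0 t) (by nlinarith [hx0 t, hx1 t])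
    linarith [hxs t]
  have hbdd : BddAbove (Set.range x) := ⟨1, by rintro _ ⟨t, rfl⟩; exact hx1 t⟩
  have hlim := tendsto_atTop_ciSup hxm hbdd
  set L := ⨆ t, x t with hL
  have hxL : ∀ t, x t ≤ L := fun t => le_ciSup hbdd t
  have hL1 : L = 1 := by
    refine le_antisymm (ciSup_le hx1) ?_
    by_contra! hlt
    set B := (k * ‖w‖ * (η 0 / ‖h 0‖)) ^ 2 with hB
    have hgrow : ∀ t : ℕ, ‖h t‖ ^ 2 ≤ ‖h 0‖ ^ 2 + B * t := by
      intro t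
      induction t with
      | zero => simp
      | succ t ih =>
        have h1 : (k * η t * ‖w‖ / ‖h t‖) ^ 2 ≤ B := by
          have hm : η t / ‖h t‖ ≤ η 0 / ‖h 0‖ := hmono (Nat.zero_le t)
          have e : k * η t * ‖w‖ / ‖h t‖ = k * ‖w‖ * (η t / ‖h t‖) := by ring
          rw [e, hB]
          have := hηp t
          gcongr
        push_cast
        linarith [(hstep t).2.1]
    have hB0 : 0 ≤ B := sq_nonneg _
    have hR : 0 < ‖h 0‖ ^ 2 := by have := hr 0; positivity
    set c := k * ε0 * ‖w‖ / (‖h 0‖ ^ 2 + B) with hc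
    have hcpos : 0 < c := by positivity
    have hac : ∀ t : ℕ, c * (1 / ((t : ℝ) + 1)) ≤ a t := by
      intro t
      have hrt := hr t
      have h1 : ‖h t‖ ^ 2 ≤ (‖h 0‖ ^ 2 + B) * ((t : ℝ) + 1) := by
        have := hgrow t
        have : 0 ≤ ‖h 0‖ ^ 2 * (t : ℝ) := by positivity
        nlinarith
      rw [hc, div_mul_div_comm, mul_one]
      have := hη t
      have := hηp t
      simp only [ha]
      gcongr
    set δ := (1 - L) * (1 + x 0) with hδ
    have hx00 : -1 < x 0 := hcos
    have hδpos : 0 < δ := mul_pos (by linarith) (by linarith)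
    have hδx : ∀ t, δ ≤ 1 - x t ^ 2 := by
      intro t
      have e : 1 - x t ^ 2 = (1 - x t) * (1 + x t) := by ring
      rw [e]
      exact mul_le_mul (by linarith [hxL t]) (by linarith [hxm (Nat.zero_le t)])
        (by linarith) (by linarith [hx1 t])
    have hsum : ∀ n : ℕ,
        x 0 + c * δ / 3 * ∑ t ∈ Finset.range n, 1 / ((t : ℝ) + 1) ≤ x n := by
      intro n
      induction n with
      | zero => simp
      | succ n ih =>
        rw [Finset.sum_range_succ]
        have := mul_le_mul (hac n) (hδx n) hδpos.le (ha0 n)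
        have := hxs n
        linarith
    have hdiv := Real.tendsto_sum_range_one_div_nat_succ_atTop
    obtain ⟨n, hn⟩ := (hdiv.eventually_gt_atTop (2 / (c * δ / 3))).exists
    rw [div_lt_iff₀ (by positivity)] at hn
    linarith [hsum n, hx1 n]
  rw [hL1] at hlim
  have hform : ∀ t, ‖(‖h t‖⁻¹ • h t) - (‖w‖⁻¹ • w)‖ = √(2 - 2 * x t) := by
    intro t
    have hrt := hr t
    rw [← Real.sqrt_sq (norm_nonneg (‖h t‖⁻¹ • h t - ‖w‖⁻¹ • w)), norm_sub_sq_real,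
      norm_smul, norm_smul, norm_inv, norm_inv, norm_norm, norm_norm,
      inv_mul_cancel₀ hrt.ne', inv_mul_cancel₀ hW.ne', real_inner_smul_left,
      real_inner_smul_right]
    congr 1
    simp only [hx]
    field_simp
    ring
  simp only [hform]
  have : Tendsto (fun t => √(2 - 2 * x t)) atTop (nhds √(2 - 2 * 1)) :=
    ((hlim.const_mul 2).const_sub 2).sqrt
  simpa using this

end

/-- **Convergence in the spherical constrained case (prototype-anchored features).**
Under gradient descent of the spherically constrained unhinged objective with fixed
prototypes `w c`, every normalized feature `h i c (t)/‖h i c (t)‖` converges to the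
normalized prototype `w c/‖w c‖`; equivalently, the matrix of normalized features
converges (in Frobenius distance) to the matrix of normalized prototypes. -/
theorem spherical_constrained_convergence
    (C N p : ℕ) (hC : 1 ≤ C) (hN : 1 ≤ N) (hp : 1 ≤ p)
    (γ : ℝ) (hγ : 0 < γ)
    (ε0 : ℝ) (hε0 : 0 < ε0)
    (w : Fin C → EuclideanSpace ℝ (Fin p)) (hw : ∀ c, w c ≠ 0)
    (η : ℕ → ℝ) (hη : ∀ t, ε0 ≤ η t)
    (hηratio : Tendsto (fun t => η (t + 1) / η t) atTop (nhds 1))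
    (h : Fin N → Fin C → ℕ → EuclideanSpace ℝ (Fin p))
    (h0 : ∀ i c, h i c 0 ≠ 0)
    (hcos : ∀ i c, ⟪w c, h i c 0⟫ / (‖w c‖ * ‖h i c 0‖) > -1)
    (hrec : ∀ (i : Fin N) (c : Fin C) (t : ℕ),
      h i c (t + 1) = h i c t +
        ((1 + γ) * η t / ((C : ℝ) * N * ‖h i c t‖)) •
          (w c - (⟪h i c t, w c⟫ / ‖h i c t‖ ^ 2) • h i c t))
    (hmono : ∀ i c, Antitone fun t => η t / ‖h i c t‖)
    (hinit : ∀ i c, (1 + γ) * η 0 * ‖w c‖ / ((C : ℝ) * N) ≤ ‖h i c 0‖ ^ 2) :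
    (∀ (i : Fin N) (c : Fin C),
      (∀ t, h i c t ≠ 0) ∧
      Tendsto (fun t => ‖(‖h i c t‖⁻¹ • h i c t) - (‖w c‖⁻¹ • w c)‖) atTop (nhds 0)) ∧
    Tendsto
      (fun t => Real.sqrt (∑ i : Fin N, ∑ c : Fin C,
        ‖(‖h i c t‖⁻¹ • h i c t) - (‖w c‖⁻¹ • w c)‖ ^ 2))
      atTop (nhds 0) := by
  have hCp : (0 : ℝ) < C := by exact_mod_cast hC
  have hNp : (0 : ℝ) < N := by exact_mod_cast hN
  have key : ∀ (i : Fin N) (c : Fin C), (∀ t, h i c t ≠ 0) ∧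
      Tendsto (fun t => ‖(‖h i c t‖⁻¹ • h i c t) - (‖w c‖⁻¹ • w c)‖) atTop (nhds 0) := by
    intro i c
    refine feature_tendsto (k := (1 + γ) / ((C : ℝ) * N)) (by positivity) (hw c) hε0 hη
      (h0 i c) ?_ ?_ (hmono i c) ?_
    · rw [real_inner_comm, mul_comm]
      exact hcos i c
    · intro t
      rw [hrec i c t]
      congr 2
      rw [div_mul_eq_mul_div, div_div]
    · refine le_of_eq_of_le ?_ (hinit i c)
      ring
  refine ⟨key, ?_⟩
  have hsum : Tendsto (fun t => ∑ i : Fin N, ∑ c : Fin C,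
      ‖(‖h i c t‖⁻¹ • h i c t) - (‖w c‖⁻¹ • w c)‖ ^ 2) atTop
      (nhds (∑ _i : Fin N, ∑ _c : Fin C, (0 : ℝ) ^ 2)) :=
    tendsto_finsetSum _ fun i _ => tendsto_finsetSum _ fun c _ => (key i c).2.pow 2
  simpa using hsum.sqrt
end

section
/- Let C ≥ 2 and p ≥ 1 be integers and γ > 0. Suppose w_1,…,w_C ∈ ℝ^p satisfy ‖w_c‖₂ = 1 for all c ∈ [C] and ⟨w_i, w_j⟩ = −1/(C−1) for all i ≠ j (i.e., the prototypes form a simplex equiangular tight frame). Let h ∈ ℝ^p with ‖h‖₂ = 1 and let y ∈ [C]. If −⟨w_y, h⟩ + γ·Σ_{j≠y} ⟨w_j, h⟩ < −(1+γ)·√((C−2)/(2(C−1))), then ⟨w_y, h⟩ > ⟨w_i, h⟩ for every i ≠ y; that is, a sample whose unhinged loss is below the threshold −(1+γ)·√((C−2)/(2(C−1))) is correctly classified by the rule argmax_c ⟨w_c, h⟩. -/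
/-!
The vectors of a simplex equiangular tight frame sum to zero (`simplexETF_sum_eq_zero`), so the loss
equals `-(1 + γ) * ⟪w y, h⟫` and the hypothesis says `⟪w y, h⟫ > t` with
`t = √((C - 2) / (2 * (C - 1)))`. Since `‖w y + w i‖ = 2 * t` for `i ≠ y`, Cauchy-Schwarz gives
`⟪w y, h⟫ + ⟪w i, h⟫ ≤ 2 * t`, hence `⟪w i, h⟫ < t < ⟪w y, h⟫`.
-/

open scoped BigOperators
open RealInnerProductSpace

theorem simplexETF_sum_eq_zero {C p : ℕ} (hC : 2 ≤ C)
    (w : Fin C → EuclideanSpace ℝ (Fin p)) (hw : ∀ c, ‖w c‖ = 1)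
    (hww : ∀ i j, i ≠ j → ⟪w i, w j⟫ = -1 / ((C : ℝ) - 1)) :
    ∑ c, w c = 0 := by
  have hC' : (2 : ℝ) ≤ C := by exact_mod_cast hC
  have hne : (C : ℝ) - 1 ≠ 0 := by linarith
  have hrow : ∀ c, ⟪w c, ∑ d, w d⟫ = 0 := by
    intro c
    rw [inner_sum, ← Finset.add_sum_erase _ _ (Finset.mem_univ c),
      Finset.sum_congr rfl (fun d hd => hww c d (Finset.ne_of_mem_erase hd).symm),
      real_inner_self_eq_norm_sq, hw, Finset.sum_const,
      Finset.card_erase_of_mem (Finset.mem_univ c), Finset.card_univ, Fintype.card_fin,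
      nsmul_eq_mul, Nat.cast_sub (by omega)]
    push_cast
    field_simp
    ring
  rw [← inner_self_eq_zero (𝕜 := ℝ), sum_inner]
  exact Finset.sum_eq_zero fun c _ => hrow c

/-- **Correct classification below the unhinged-loss threshold under a simplex ETF.**
If the unit-norm prototypes form a simplex ETF and the unhinged loss of a unit-norm
feature `h` with label `y` is below `−(1+γ)·√((C−2)/(2(C−1)))`, then `h` is correctly
classified by `argmax_c ⟪w_c, h⟫`. -/
theorem unhinged_loss_threshold_correct_classification
    (C p : ℕ) (hC : 2 ≤ C) (hp : 1 ≤ p)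
    (γ : ℝ) (hγ : 0 < γ)
    (w : Fin C → EuclideanSpace ℝ (Fin p))
    (hw : ∀ c, ‖w c‖ = 1)
    (hww : ∀ i j, i ≠ j → ⟪w i, w j⟫ = -1 / ((C : ℝ) - 1))
    (h : EuclideanSpace ℝ (Fin p)) (hh : ‖h‖ = 1)
    (y : Fin C)
    (hloss : -⟪w y, h⟫ + γ * ∑ j ∈ Finset.univ.erase y, ⟪w j, h⟫ <
      -((1 + γ) * Real.sqrt (((C : ℝ) - 2) / (2 * ((C : ℝ) - 1))))) :
    ∀ i, i ≠ y → ⟪w y, h⟫ > ⟪w i, h⟫ := by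
  intro i hi
  have hC' : (2 : ℝ) ≤ C := by exact_mod_cast hC
  have hne : (C : ℝ) - 1 ≠ 0 := by linarith
  set t := Real.sqrt (((C : ℝ) - 2) / (2 * ((C : ℝ) - 1))) with ht
  have ht0 : 0 ≤ t := Real.sqrt_nonneg _
  have htsq : t ^ 2 = ((C : ℝ) - 2) / (2 * ((C : ℝ) - 1)) :=
    Real.sq_sqrt (div_nonneg (by linarith) (by linarith))
  have hsum : ⟪w y, h⟫ + ∑ j ∈ Finset.univ.erase y, ⟪w j, h⟫ = 0 := by
    rw [Finset.add_sum_erase _ (fun j => ⟪w j, h⟫) (Finset.mem_univ y), ← sum_inner,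
      simplexETF_sum_eq_zero hC w hw hww, inner_zero_left]
  have hy : t < ⟪w y, h⟫ := by
    rw [eq_neg_of_add_eq_zero_right hsum] at hloss
    nlinarith
  have hnorm : ‖w y + w i‖ = 2 * t := by
    rw [← sq_eq_sq₀ (norm_nonneg _) (by positivity), norm_add_sq_real, hw, hw,
      hww y i hi.symm, mul_pow, htsq]
    field_simp
    ring
  have hcs : ⟪w y, h⟫ + ⟪w i, h⟫ ≤ 2 * t := by
    rw [← inner_add_left, ← hnorm]
    simpa [hh] using real_inner_le_norm (w y + w i) h
  linarith
end
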